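/- arXiv:1607.08716 — 3 statements merged into one kernel-verified Lean document; each statement's English description precedes it below -/
import Mathlib

section
/- Let d ≥ 2, let Λ₀ = N·ℤ^{d-1} ⊂ ℝ^{d-1} be a Bravais lattice (N an invertible (d-1)×(d-1) real matrix), and let H ⊂ ℝ^{d-1} be a finite set having the same symmetries as Λ₀. Fix t > 0 and α ≥ 1/(2πt²). Let b : {1,…,|H|} → H be a bijection and let s_b : ℤ → H be its |H|-periodic extension (s_b(k) = b(k mod |H|)). Then for every periodic map s : ℤ → H with period P, the average Gaussian energy per point satisfies E^{f_α}(Λ_{s_b}) ≤ E^{f_α}(Λ_s), where for a P-periodic s, E^{f_α}(Λ_s) := (1/P) · Σ_{h=1}^{P} Σ_{k∈ℤ} Σ_{p∈Λ₀} exp(−πα((h−k)²t² + |s(h)−s(k)+p|²)). -/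
open scoped BigOperators

/-!
Write `θ(x) = ∑_{p ∈ Λ₀} exp(-πα |x + p|²)`, `c = παt² ≥ 1/2` and `g(j) = exp(-c j²)`.

*Reduction to a word problem.*  By the symmetry of `H`, `θ(x - y)` takes one value `B` for all
distinct `x, y ∈ H`, and `θ` is maximal at `0` (`shiftedTheta_le_zero`), so `D = θ(0) - B ≥ 0`
(`exists_two_level`).  Hence the energy of `s` is `B ∑_j g(j) + D ∑_j g(j) ρ_s(j)`, where `ρ_s(j)`
is the frequency of `h` with `s(h + j) = s(h)` (`mean_energy_eq`), and it remains to minimise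
`∑_j g(j) ρ_s(j)`.

*Maximality of `θ(0)`.*  The substitution `(p, q) ↦ (p + q, p - q)` splits products of lattice sums
over the cosets of `2Λ₀` (`sum_cosetTheta_mul`).  With `a_c(y)` the coset sums at half the exponent,
`θ(x)² = ∑_c a_c(2x) a_c(0)`, `θ(2x)θ(0) = ∑_c a_c(2x)²` and `θ(0)² = ∑_c a_c(0)²`, so that
`2θ(x)² ≤ θ(2x)θ(0) + θ(0)²`.  Applied to the (finite) supremum of `θ`, this gives `sup θ ≤ θ(0)`.

*The word problem.*  Let `U_s(M)` be the average number of ordered pairs of equal letters in a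
window of length `M` of `s`.  Letter counts in a window of the cyclic word differ by at most one,
and balanced counts minimise the sum of their squares, so `U_{s_b}(M) ≤ U_s(M)`
(`windowPairs_cyclic_le`).  On the other hand `U_s(M + 1) - U_s(M) = 1 + 2 ∑_{j=1}^M ρ_s(j)`
(`windowPairs_succ`), i.e. `U_s` is a second primitive of `2ρ_s`.  Since `c ≥ 1/2` makes `g`
discretely convex on the integers `≥ 1`, two summations by parts transfer the inequality to
`∑_j g(j) ρ_s(j)` (`tsum_gauss_mul_nonneg`, `tsum_repeatFreq_le`).
-/

/-! ### Gaussian lattice sums -/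

/-- The Gaussian lattice sum `∑_{p ∈ Nℤ^m} exp(-a |x + p|²)`, as a function of the shift `x`. -/
noncomputable def shiftedTheta {m : ℕ} (a : ℝ) (N : Matrix (Fin m) (Fin m) ℝ)
    (x : Fin m → ℝ) : ℝ :=
  ∑' p : Fin m → ℤ, Real.exp (-a * ∑ i, (x i + N.mulVec (fun j => (p j : ℝ)) i) ^ 2)

lemma summable_int_gauss {c : ℝ} (hc : 0 < c) :
    Summable fun k : ℤ => Real.exp (-c * (k : ℝ) ^ 2) := by
  have h : Summable fun n : ℕ => Real.exp (-c * (n : ℝ) ^ 2) := by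
    have := Real.summable_exp_nat_mul_of_ge (c := -c) (by linarith)
      (f := fun n : ℕ => (n : ℝ) ^ 2) (fun n => by
        rcases Nat.eq_zero_or_pos n with rfl | hn
        · simp
        · have : (1 : ℝ) ≤ n := by exact_mod_cast hn
          nlinarith)
    simpa using this
  refine Summable.of_nat_of_neg (by simpa using h) (by simpa using h)

lemma summable_pi_gauss {c : ℝ} (hc : 0 < c) (m : ℕ) :
    Summable fun p : Fin m → ℤ => Real.exp (-c * ∑ i, (p i : ℝ) ^ 2) := by
  induction m with
  | zero => exact Summable.of_finite
  | succ m ih =>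
    rw [← (Fin.consEquiv (fun _ : Fin (m + 1) => ℤ)).summable_iff]
    refine ((summable_int_gauss hc).mul_of_nonneg ih (fun _ => (Real.exp_pos _).le)
      (fun _ => (Real.exp_pos _).le)).congr ?_
    rintro ⟨k, p⟩
    simp [Fin.consEquiv, Fin.sum_univ_succ, ← Real.exp_add, mul_add]

lemma sum_mulVec_sq_le {m : ℕ} (N : Matrix (Fin m) (Fin m) ℝ) (v : Fin m → ℝ) :
    ∑ i, (N.mulVec v i) ^ 2 ≤ (∑ i, ∑ j, N i j ^ 2) * ∑ j, v j ^ 2 := by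
  rw [Finset.sum_mul]
  refine Finset.sum_le_sum fun i _ => ?_
  exact Finset.sum_mul_sq_le_sq_mul_sq Finset.univ (N i) v

/-- A nondegenerate lattice quadratic form dominates a multiple of the standard one, up to a
shift-dependent constant. -/
lemma exists_quadratic_lower_bound {m : ℕ} (N : Matrix (Fin m) (Fin m) ℝ)
    (hN : IsUnit N.det) :
    ∃ κ : ℝ, 0 < κ ∧ ∀ (x v : Fin m → ℝ),
      κ * ∑ i, v i ^ 2 - ∑ i, x i ^ 2 ≤ ∑ i, (x i + N.mulVec v i) ^ 2 := by
  set K : ℝ := (∑ i, ∑ j, N⁻¹ i j ^ 2) + 1 with hK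
  have hK0 : 0 < K := by positivity
  refine ⟨1 / (2 * K), by positivity, fun x v => ?_⟩
  have h1 : ∑ i, v i ^ 2 ≤ K * ∑ i, (N.mulVec v i) ^ 2 := by
    have h := sum_mulVec_sq_le N⁻¹ (N.mulVec v)
    rw [Matrix.mulVec_mulVec, Matrix.nonsing_inv_mul _ hN, Matrix.one_mulVec] at h
    have : (0 : ℝ) ≤ ∑ i, (N.mulVec v i) ^ 2 := by positivity
    rw [hK]
    linarith
  have h2 : ∑ i, (N.mulVec v i) ^ 2
      ≤ 2 * ∑ i, (x i + N.mulVec v i) ^ 2 + 2 * ∑ i, x i ^ 2 := by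
    rw [Finset.mul_sum, Finset.mul_sum, ← Finset.sum_add_distrib]
    refine Finset.sum_le_sum fun i _ => ?_
    nlinarith [sq_nonneg (2 * x i + N.mulVec v i)]
  have h3 : 1 / (2 * K) * ∑ i, v i ^ 2 ≤ 1 / (2 * K) * (K * ∑ i, (N.mulVec v i) ^ 2) := by
    gcongr
  have h4 : 1 / (2 * K) * (K * ∑ i, (N.mulVec v i) ^ 2)
      = (∑ i, (N.mulVec v i) ^ 2) / 2 := by
    field_simp
  linarith

section Theta

variable {m : ℕ} {a : ℝ} {N : Matrix (Fin m) (Fin m) ℝ}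

lemma summable_shiftedTheta (ha : 0 < a) (hN : IsUnit N.det) (x : Fin m → ℝ) :
    Summable fun p : Fin m → ℤ =>
      Real.exp (-a * ∑ i, (x i + N.mulVec (fun j => (p j : ℝ)) i) ^ 2) := by
  obtain ⟨κ, hκ, hb⟩ := exists_quadratic_lower_bound N hN
  refine Summable.of_nonneg_of_le (fun _ => (Real.exp_pos _).le) (fun p => ?_)
    ((summable_pi_gauss (mul_pos ha hκ) m).mul_left (Real.exp (a * ∑ i, x i ^ 2)))
  rw [← Real.exp_add, Real.exp_le_exp]
  have := mul_le_mul_of_nonneg_left (hb x (fun j => (p j : ℝ))) ha.le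
  linarith

lemma shiftedTheta_add_lattice (x : Fin m → ℝ) (q : Fin m → ℤ) :
    shiftedTheta a N (x + N.mulVec (fun j => (q j : ℝ))) = shiftedTheta a N x := by
  unfold shiftedTheta
  rw [← (Equiv.addLeft q).tsum_eq (fun p : Fin m → ℤ =>
    Real.exp (-a * ∑ i, (x i + N.mulVec (fun j => (p j : ℝ)) i) ^ 2))]
  refine tsum_congr fun p => ?_
  have : (fun j => (((Equiv.addLeft q) p j : ℤ) : ℝ))
      = (fun j => (q j : ℝ)) + fun j => (p j : ℝ) := by
    ext j; simp
  rw [this, Matrix.mulVec_add]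
  simp [add_assoc]

/-- By periodicity the shift may be reduced to a fundamental cell, on which the lattice sum is
bounded. -/
lemma shiftedTheta_bounded (ha : 0 < a) (hN : IsUnit N.det) :
    ∃ C : ℝ, ∀ x : Fin m → ℝ, shiftedTheta a N x ≤ C := by
  obtain ⟨κ, hκ, hb⟩ := exists_quadratic_lower_bound N hN
  refine ⟨Real.exp (a * ((∑ i, ∑ j, N i j ^ 2) * m)) *
    ∑' p : Fin m → ℤ, Real.exp (-(a * κ) * ∑ i, (p i : ℝ) ^ 2), fun x => ?_⟩
  set y : Fin m → ℝ := N⁻¹.mulVec x with hy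
  set z : Fin m → ℝ := N.mulVec (fun j => Int.fract (y j)) with hz
  have hx : x = z + N.mulVec (fun j => ((⌊y j⌋ : ℤ) : ℝ)) := by
    have h1 : (fun j => Int.fract (y j)) + (fun j => ((⌊y j⌋ : ℤ) : ℝ)) = y := by
      ext j; simp
    rw [hz, ← Matrix.mulVec_add, h1, hy, Matrix.mulVec_mulVec, Matrix.mul_nonsing_inv _ hN,
      Matrix.one_mulVec]
  have hzb : ∑ i, z i ^ 2 ≤ (∑ i, ∑ j, N i j ^ 2) * m := by
    refine (sum_mulVec_sq_le N _).trans ?_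
    gcongr
    calc ∑ j, Int.fract (y j) ^ 2 ≤ ∑ _j : Fin m, (1 : ℝ) := by
          refine Finset.sum_le_sum fun j _ => ?_
          have := Int.fract_nonneg (y j)
          have := Int.fract_lt_one (y j)
          nlinarith
      _ = m := by simp
  rw [hx, shiftedTheta_add_lattice, ← tsum_mul_left]
  refine Summable.tsum_le_tsum (fun p => ?_) (summable_shiftedTheta ha hN z)
    ((summable_pi_gauss (mul_pos ha hκ) m).mul_left _)
  rw [← Real.exp_add, Real.exp_le_exp]
  have h1 := mul_le_mul_of_nonneg_left (hb z (fun j => (p j : ℝ))) ha.le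
  have h2 := mul_le_mul_of_nonneg_left hzb ha.le
  linarith

/-- The partial Gaussian sum over the coset `c + 2ℤ^m` at half the exponent. -/
noncomputable def cosetTheta (a : ℝ) (N : Matrix (Fin m) (Fin m) ℝ)
    (c : Fin m → Fin 2) (y : Fin m → ℝ) : ℝ :=
  ∑' u : Fin m → ℤ, Real.exp (-(a / 2) *
    ∑ i, (y i + N.mulVec (fun j => (((c j : ℕ) : ℝ) + 2 * (u j : ℝ))) i) ^ 2)

lemma summable_cosetTheta (ha : 0 < a) (hN : IsUnit N.det) (c : Fin m → Fin 2)
    (y : Fin m → ℝ) :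
    Summable fun u : Fin m → ℤ => Real.exp (-(a / 2) *
      ∑ i, (y i + N.mulVec (fun j => (((c j : ℕ) : ℝ) + 2 * (u j : ℝ))) i) ^ 2) := by
  have h := summable_shiftedTheta (half_pos ha) hN y
  have hinj : Function.Injective
      (fun u : Fin m → ℤ => fun j => (((c j : ℕ) : ℤ) + 2 * u j)) := by
    intro u v huv
    ext j
    have := congrFun huv j
    simp only at this
    omega
  refine (h.comp_injective hinj).congr fun u => ?_
  simp

/-- The change of variables `(c, u, v) ↦ (p, q)` with `p + q = c + 2u` and `p - q = c + 2v`. -/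
def parityEquiv (m : ℕ) :
    (Fin m → Fin 2) × ((Fin m → ℤ) × (Fin m → ℤ)) ≃ (Fin m → ℤ) × (Fin m → ℤ) where
  toFun w := (fun j => ((w.1 j : ℕ) : ℤ) + w.2.1 j + w.2.2 j, fun j => w.2.1 j - w.2.2 j)
  invFun w := (fun j => ⟨((w.1 j + w.2 j) % 2).toNat, by omega⟩,
    (fun j => (w.1 j + w.2 j) / 2, fun j => (w.1 j + w.2 j) / 2 - w.2 j))
  left_inv := by
    rintro ⟨c, u, v⟩
    refine Prod.ext ?_ (Prod.ext ?_ ?_)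
    · ext j
      have := (c j).isLt
      simp only
      omega
    · ext j
      have := (c j).isLt
      simp only
      omega
    · ext j
      have := (c j).isLt
      simp only
      omega
  right_inv := by
    rintro ⟨p, q⟩
    refine Prod.ext ?_ ?_
    · ext j
      simp only
      omega
    · ext j
      simp only
      omega

/-- The parallelogram law turns a product of two lattice sums into a sum over cosets mod 2. -/
lemma sum_cosetTheta_mul (ha : 0 < a) (hN : IsUnit N.det) (x y : Fin m → ℝ) :
    ∑ c, cosetTheta a N c (x + y) * cosetTheta a N c (x - y)
      = shiftedTheta a N x * shiftedTheta a N y := by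
  have hsx := summable_shiftedTheta ha hN x
  have hsy := summable_shiftedTheta ha hN y
  have hprod := hsx.mul_of_nonneg hsy (fun _ => (Real.exp_pos _).le)
    (fun _ => (Real.exp_pos _).le)
  unfold shiftedTheta
  rw [hsx.tsum_mul_tsum hsy hprod, ← (parityEquiv m).tsum_eq]
  have hprod' := (parityEquiv m).summable_iff.mpr hprod
  refine Eq.trans ?_ (Summable.tsum_prod hprod').symm
  rw [tsum_fintype]
  refine Finset.sum_congr rfl fun c _ => ?_
  have h1 := summable_cosetTheta ha hN c (x + y)
  have h2 := summable_cosetTheta ha hN c (x - y)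
  unfold cosetTheta
  rw [h1.tsum_mul_tsum h2 (h1.mul_of_nonneg h2 (fun _ => (Real.exp_pos _).le)
    (fun _ => (Real.exp_pos _).le))]
  refine tsum_congr fun w => ?_
  obtain ⟨u, v⟩ := w
  simp only [Function.comp_apply]
  rw [← Real.exp_add, ← Real.exp_add]
  congr 1
  have e1 : (fun j => (((c j : ℕ) : ℝ) + 2 * (u j : ℝ)))
      = (fun j => (((parityEquiv m (c, u, v)).1 j : ℤ) : ℝ))
        + fun j => (((parityEquiv m (c, u, v)).2 j : ℤ) : ℝ) := by
    ext j; simp [parityEquiv]; ring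
  have e2 : (fun j => (((c j : ℕ) : ℝ) + 2 * (v j : ℝ)))
      = (fun j => (((parityEquiv m (c, u, v)).1 j : ℤ) : ℝ))
        - fun j => (((parityEquiv m (c, u, v)).2 j : ℤ) : ℝ) := by
    ext j; simp [parityEquiv]; ring
  simp only [e1, e2, Matrix.mulVec_add, Matrix.mulVec_sub]
  simp only [Finset.mul_sum, ← Finset.sum_add_distrib]
  refine Finset.sum_congr rfl fun i _ => ?_
  simp only [Pi.add_apply, Pi.sub_apply]
  ring

/-- The Gaussian lattice sum is maximal at the unshifted lattice.  Completing squares over cosets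
gives `2θ(x)² ≤ θ(2x)θ(0) + θ(0)²`, so `M = sup θ` satisfies `2M² ≤ Mθ(0) + θ(0)²`. -/
lemma shiftedTheta_le_zero (ha : 0 < a) (hN : IsUnit N.det) (x : Fin m → ℝ) :
    shiftedTheta a N x ≤ shiftedTheta a N 0 := by
  obtain ⟨C, hC⟩ := shiftedTheta_bounded ha hN
  have hbdd : BddAbove (Set.range (shiftedTheta a N)) := ⟨C, by rintro _ ⟨y, rfl⟩; exact hC y⟩
  set M := ⨆ y, shiftedTheta a N y with hM
  set A := shiftedTheta a N 0 with hA
  have hle : ∀ y, shiftedTheta a N y ≤ M := fun y => le_ciSup hbdd y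
  have hnn : ∀ y, 0 ≤ shiftedTheta a N y := fun y => tsum_nonneg fun _ => (Real.exp_pos _).le
  have hA0 : 0 ≤ A := hnn 0
  have key : ∀ y, 2 * shiftedTheta a N y ^ 2 ≤ M * A + A ^ 2 := by
    intro y
    have h1 := sum_cosetTheta_mul ha hN y y
    have h2 := sum_cosetTheta_mul ha hN (y + y) 0
    have h3 := sum_cosetTheta_mul ha hN (0 : Fin m → ℝ) 0
    simp only [add_zero, sub_zero, sub_self] at h1 h2 h3
    have h4 : 2 * ∑ c, cosetTheta a N c (y + y) * cosetTheta a N c 0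
        ≤ ∑ c, cosetTheta a N c (y + y) * cosetTheta a N c (y + y)
          + ∑ c, cosetTheta a N c 0 * cosetTheta a N c 0 := by
      rw [Finset.mul_sum, ← Finset.sum_add_distrib]
      refine Finset.sum_le_sum fun c _ => ?_
      nlinarith [sq_nonneg (cosetTheta a N c (y + y) - cosetTheta a N c 0)]
    rw [h1, h2, h3, ← hA] at h4
    have := mul_le_mul_of_nonneg_right (hle (y + y)) hA0
    nlinarith
  by_contra! hlt
  have hMA : A < M := hlt.trans_le (hle x)
  have hR : M ≤ Real.sqrt ((M * A + A ^ 2) / 2) :=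
    ciSup_le fun y => Real.le_sqrt_of_sq_le (by have := key y; linarith)
  have hM0 : 0 ≤ M := hA0.trans hMA.le
  have := (Real.le_sqrt hM0 (by positivity)).mp hR
  nlinarith

end Theta

/-! ### Repetitions in periodic words -/

section Periodic

lemma sum_Icc_eq_sum_range (F : ℤ → ℝ) (P : ℕ) :
    ∑ h ∈ Finset.Icc (1 : ℤ) (P : ℤ), F h = ∑ i ∈ Finset.range P, F ((i : ℤ) + 1) := by
  symm
  refine Finset.sum_bij (fun i _ => (i : ℤ) + 1) ?_ ?_ ?_ ?_
  · intro i hi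
    simp only [Finset.mem_range, Finset.mem_Icc] at *
    omega
  · intro i _ j _ hij
    omega
  · intro k hk
    simp only [Finset.mem_Icc] at hk
    exact ⟨(k - 1).toNat, by simp only [Finset.mem_range]; omega, by omega⟩
  · intro i _
    rfl

lemma sum_Icc_shift {F : ℤ → ℝ} {P : ℕ} (hF : ∀ k, F (k + (P : ℤ)) = F k) (a : ℤ) :
    ∑ h ∈ Finset.Icc (1 : ℤ) (P : ℤ), F (h + a) = ∑ h ∈ Finset.Icc (1 : ℤ) (P : ℤ), F h := by
  have step : ∀ b : ℤ, ∑ h ∈ Finset.Icc (1 : ℤ) (P : ℤ), F (h + (b + 1))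
      = ∑ h ∈ Finset.Icc (1 : ℤ) (P : ℤ), F (h + b) := by
    intro b
    rw [sum_Icc_eq_sum_range (fun h => F (h + (b + 1))), sum_Icc_eq_sum_range (fun h => F (h + b))]
    have h1 := Finset.sum_range_succ (fun i : ℕ => F ((i : ℤ) + 1 + b)) P
    have h2 := Finset.sum_range_succ' (fun i : ℕ => F ((i : ℤ) + 1 + b)) P
    have h3 : F ((P : ℤ) + 1 + b) = F (((0 : ℕ) : ℤ) + 1 + b) := by
      rw [← hF (((0 : ℕ) : ℤ) + 1 + b)]
      congr 1
      push_cast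
      ring
    have h4 : ∑ i ∈ Finset.range P, F ((i : ℤ) + 1 + (b + 1))
        = ∑ i ∈ Finset.range P, F (((i + 1 : ℕ) : ℤ) + 1 + b) := by
      refine Finset.sum_congr rfl fun i _ => ?_
      congr 1
      push_cast
      ring
    linarith
  induction a using Int.induction_on with
  | zero => simp
  | succ i ih => rw [step, ih]
  | pred i ih =>
    have := step (-(i : ℤ) - 1)
    rw [sub_add_cancel] at this
    rw [← this, ih]

variable {X : Type*}

open Classical in
/-- The indicator of `x = y`, as a real number. -/
noncomputable def eqInd (x y : X) : ℝ := if x = y then 1 else 0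

lemma eqInd_nonneg (x y : X) : 0 ≤ eqInd x y := by unfold eqInd; split_ifs <;> norm_num

lemma eqInd_le_one (x y : X) : eqInd x y ≤ 1 := by unfold eqInd; split_ifs <;> norm_num

lemma eqInd_comm (x y : X) : eqInd x y = eqInd y x := by
  by_cases h : x = y
  · rw [h]
  · simp [eqInd, h, Ne.symm h]

@[simp] lemma eqInd_self (x : X) : eqInd x x = 1 := by simp [eqInd]

/-- The frequency of positions `h` in one period with `s (h + j) = s h`. -/
noncomputable def repeatFreq (s : ℤ → X) (P : ℕ) (j : ℤ) : ℝ :=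
  (1 / (P : ℝ)) * ∑ h ∈ Finset.Icc (1 : ℤ) (P : ℤ), eqInd (s h) (s (h + j))

/-- The average, over windows of length `M`, of the number of ordered pairs of equal letters. -/
noncomputable def windowPairs (s : ℤ → X) (P M : ℕ) : ℝ :=
  (1 / (P : ℝ)) * ∑ h ∈ Finset.Icc (1 : ℤ) (P : ℤ),
    ∑ a ∈ Finset.range M, ∑ b ∈ Finset.range M, eqInd (s (h + a)) (s (h + b))

lemma repeatFreq_nonneg (s : ℤ → X) (P : ℕ) (j : ℤ) : 0 ≤ repeatFreq s P j :=
  mul_nonneg (by positivity) (Finset.sum_nonneg fun _ _ => eqInd_nonneg _ _)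

lemma mean_const {P : ℕ} (hP : 0 < P) (x : ℝ) :
    (1 / (P : ℝ)) * ∑ _h ∈ Finset.Icc (1 : ℤ) (P : ℤ), x = x := by
  have : (P : ℝ) ≠ 0 := by positivity
  simp [Finset.sum_const]
  field_simp

lemma mean_le {P : ℕ} (hP : 0 < P) {F : ℤ → ℝ} {C : ℝ} (h : ∀ k, F k ≤ C) :
    (1 / (P : ℝ)) * ∑ k ∈ Finset.Icc (1 : ℤ) (P : ℤ), F k ≤ C := by
  refine le_trans ?_ (mean_const hP C).le
  gcongr
  exact h _

lemma le_mean {P : ℕ} (hP : 0 < P) {F : ℤ → ℝ} {C : ℝ} (h : ∀ k, C ≤ F k) :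
    C ≤ (1 / (P : ℝ)) * ∑ k ∈ Finset.Icc (1 : ℤ) (P : ℤ), F k := by
  refine (mean_const hP C).ge.trans ?_
  gcongr
  exact h _

lemma repeatFreq_le_one (s : ℤ → X) {P : ℕ} (hP : 0 < P) (j : ℤ) : repeatFreq s P j ≤ 1 :=
  mean_le hP fun _ => eqInd_le_one _ _

lemma repeatFreq_zero (s : ℤ → X) {P : ℕ} (hP : 0 < P) : repeatFreq s P 0 = 1 := by
  simp only [repeatFreq, add_zero, eqInd_self]
  exact mean_const hP 1

lemma mean_eqInd_shift {s : ℤ → X} {P : ℕ} (hs : ∀ k, s (k + (P : ℤ)) = s k) (a b : ℤ) :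
    (1 / (P : ℝ)) * ∑ h ∈ Finset.Icc (1 : ℤ) (P : ℤ), eqInd (s (h + a)) (s (h + b))
      = repeatFreq s P (b - a) := by
  unfold repeatFreq
  congr 1
  rw [← sum_Icc_shift (F := fun h => eqInd (s h) (s (h + (b - a)))) (a := a)]
  · refine Finset.sum_congr rfl fun h _ => ?_
    congr 2
    ring
  · intro k
    rw [hs, add_right_comm, hs]

lemma repeatFreq_neg {s : ℤ → X} {P : ℕ} (hs : ∀ k, s (k + (P : ℤ)) = s k) (j : ℤ) :
    repeatFreq s P (-j) = repeatFreq s P j := by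
  have h1 := mean_eqInd_shift hs j 0
  have h2 := mean_eqInd_shift hs 0 j
  rw [zero_sub] at h1
  rw [sub_zero] at h2
  rw [← h1, ← h2]
  simp only [eqInd_comm]

lemma windowPairs_succ {s : ℤ → X} {P : ℕ} (hP : 0 < P) (hs : ∀ k, s (k + (P : ℤ)) = s k)
    (M : ℕ) :
    windowPairs s P (M + 1)
      = windowPairs s P M + 1 + 2 * ∑ i ∈ Finset.range M, repeatFreq s P ((i : ℤ) + 1) := by
  have hrow : ∀ h : ℤ, ∑ a ∈ Finset.range (M + 1), ∑ b ∈ Finset.range (M + 1),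
        eqInd (s (h + a)) (s (h + b))
      = ∑ a ∈ Finset.range M, ∑ b ∈ Finset.range M, eqInd (s (h + a)) (s (h + b))
        + 1 + 2 * ∑ a ∈ Finset.range M, eqInd (s (h + a)) (s (h + M)) := by
    intro h
    simp only [Finset.sum_range_succ, Finset.sum_add_distrib, eqInd_self]
    rw [Finset.sum_congr rfl fun b _ => eqInd_comm (s (h + (M : ℤ))) (s (h + (b : ℕ)))]
    ring
  have hcol : ∑ i ∈ Finset.range M, repeatFreq s P ((i : ℤ) + 1)
      = (1 / (P : ℝ)) * ∑ h ∈ Finset.Icc (1 : ℤ) (P : ℤ),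
          ∑ a ∈ Finset.range M, eqInd (s (h + a)) (s (h + M)) := by
    rw [Finset.sum_comm, Finset.mul_sum, ← Finset.sum_range_reflect]
    refine Finset.sum_congr rfl fun a ha => ?_
    rw [mean_eqInd_shift hs]
    congr 1
    have := Finset.mem_range.mp ha
    omega
  have h1 := mean_const hP 1
  unfold windowPairs
  simp only [hrow, Finset.sum_add_distrib, ← Finset.mul_sum]
  rw [hcol, mul_add, mul_add, h1]
  ring

open Classical in
lemma sum_eqInd_eq_sum_count_sq (H : Finset X) (u : ℕ → X) (hu : ∀ a, u a ∈ H) (M : ℕ) :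
    ∑ a ∈ Finset.range M, ∑ b ∈ Finset.range M, eqInd (u a) (u b)
      = ∑ x ∈ H, (((Finset.range M).filter (fun a => u a = x)).card : ℝ) ^ 2 := by
  have h : ∀ a b, eqInd (u a) (u b) = ∑ x ∈ H, eqInd (u a) x * eqInd (u b) x := by
    intro a b
    rw [Finset.sum_eq_single_of_mem (u a) (hu a)]
    · simp [eqInd_comm]
    · intro x _ hx
      simp [eqInd, hx.symm]
  simp only [h]
  rw [Finset.sum_congr rfl fun a _ => Finset.sum_comm, Finset.sum_comm]
  refine Finset.sum_congr rfl fun x _ => ?_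
  rw [← Finset.sum_mul_sum, sq]
  simp [eqInd]

open Classical in
lemma sum_count_eq (H : Finset X) (u : ℕ → X) (hu : ∀ a, u a ∈ H) (M : ℕ) :
    ∑ x ∈ H, (((Finset.range M).filter (fun a => u a = x)).card : ℝ) = M := by
  have := Finset.card_eq_sum_card_fiberwise (s := Finset.range M) (t := H) (f := u)
    (fun a _ => hu a)
  rw [Finset.card_range] at this
  exact_mod_cast this.symm

/-- A word of length `M` over an alphabet of size `n` has at least as many pairs of equal letters
as a balanced word, in which every letter occurs `q` or `q + 1` times.  This follows by summing
`(c - q)(c - q - 1) ≥ 0` over the integer letter counts `c`; the bound holds for every `q`, and is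
sharp for `q = M / n`. -/
lemma le_sum_eqInd (H : Finset X) (u : ℕ → X) (hu : ∀ a, u a ∈ H) (M : ℕ) (q : ℕ) :
    (2 * (q : ℝ) + 1) * M - H.card * (q * (q + 1))
      ≤ ∑ a ∈ Finset.range M, ∑ b ∈ Finset.range M, eqInd (u a) (u b) := by
  classical
  rw [sum_eqInd_eq_sum_count_sq H u hu, ← sum_count_eq H u hu M, Finset.mul_sum,
    ← nsmul_eq_mul, ← Finset.sum_const, ← Finset.sum_sub_distrib]
  refine Finset.sum_le_sum fun x _ => ?_
  generalize ((Finset.range M).filter (fun a => u a = x)).card = c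
  rcases le_or_gt c q with h | h
  · have : (c : ℝ) ≤ q := by exact_mod_cast h
    nlinarith
  · have : (q : ℝ) + 1 ≤ c := by exact_mod_cast h
    nlinarith

/-- The word of residues modulo `n` is balanced, so it attains the bound of `le_sum_eqInd`. -/
lemma sum_eqInd_mod (n : ℕ) (hn : 0 < n) (M : ℕ) :
    ∑ a ∈ Finset.range M, ∑ b ∈ Finset.range M, eqInd (a % n) (b % n)
      = (2 * ((M / n : ℕ) : ℝ) + 1) * M - n * ((M / n : ℕ) * ((M / n : ℕ) + 1)) := by
  classical
  have hu : ∀ a : ℕ, a % n ∈ Finset.range n := fun a => Finset.mem_range.mpr (Nat.mod_lt _ hn)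
  have hc := sum_count_eq (Finset.range n) (fun a => a % n) hu M
  rw [sum_eqInd_eq_sum_count_sq (Finset.range n) (fun a => a % n) hu]
  have hn' : (n : ℝ) = ∑ _x ∈ Finset.range n, (1 : ℝ) := by simp
  conv_rhs => rw [← hc, hn']
  rw [Finset.mul_sum, Finset.sum_mul, ← Finset.sum_sub_distrib]
  refine Finset.sum_congr rfl fun x hx => ?_
  have hx' := Finset.mem_range.mp hx
  have hcount : ∀ inst : DecidablePred (fun a => a % n = x),
      (@Finset.filter ℕ (fun a => a % n = x) inst (Finset.range M)).card
        = M / n + if x % n < M % n then 1 else 0 := by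
    intro inst
    rw [← Nat.count_modEq_card M hn x, Nat.count_eq_card_filter_range]
    congr 1
    ext a
    simp [Nat.ModEq, Nat.mod_eq_of_lt hx']
  rw [hcount]
  split_ifs <;> push_cast <;> ring

/-- Windows of the cyclic word minimise the number of pairs of equal letters. -/
lemma windowPairs_cyclic_le (H : Finset X) {s sb : ℤ → X} {P : ℕ} (hP : 0 < P)
    (hH : 0 < H.card) (hsH : ∀ k, s k ∈ H)
    (hsb : ∀ k l, sb k = sb l ↔ (H.card : ℤ) ∣ k - l) (M : ℕ) :
    windowPairs sb H.card M ≤ windowPairs s P M := by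
  refine (mean_le hH (C := (2 * ((M / H.card : ℕ) : ℝ) + 1) * M
    - H.card * ((M / H.card : ℕ) * ((M / H.card : ℕ) + 1))) fun h => ?_).trans
    (le_mean hP fun h => le_sum_eqInd H (fun a => s (h + a)) (fun _ => hsH _) M (M / H.card))
  rw [← sum_eqInd_mod _ hH]
  refine le_of_eq (Finset.sum_congr rfl fun a _ => Finset.sum_congr rfl fun b _ => ?_)
  have : sb (h + a) = sb (h + b) ↔ a % H.card = b % H.card := by
    rw [hsb, add_sub_add_left_eq_sub, ← Nat.modEq_iff_dvd, Nat.ModEq]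
    exact eq_comm
  unfold eqInd
  by_cases hab : a % H.card = b % H.card
  · rw [if_pos hab, if_pos (this.mpr hab)]
  · rw [if_neg hab, if_neg (mt this.mp hab)]

lemma windowPairs_nonneg (s : ℤ → X) (P M : ℕ) : 0 ≤ windowPairs s P M :=
  mul_nonneg (by positivity) (Finset.sum_nonneg fun _ _ => Finset.sum_nonneg fun _ _ =>
    Finset.sum_nonneg fun _ _ => eqInd_nonneg _ _)

lemma windowPairs_le (s : ℤ → X) {P : ℕ} (hP : 0 < P) (M : ℕ) :
    windowPairs s P M ≤ (M : ℝ) ^ 2 := by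
  refine mean_le hP fun h => ?_
  calc _ ≤ ∑ a ∈ Finset.range M, ∑ b ∈ Finset.range M, (1 : ℝ) :=
        Finset.sum_le_sum fun _ _ => Finset.sum_le_sum fun _ _ => eqInd_le_one _ _
    _ = (M : ℝ) ^ 2 := by simp [sq]

end Periodic

/-! ### Summation by parts against the Gaussian -/

section Abel

/-- Convexity of the Gaussian weight at the integers `≥ 1`; this is where `c ≥ 1/2` enters. -/
lemma gauss_second_diff_nonneg {c : ℝ} (hc : 1 / 2 ≤ c) (K : ℕ) (hK : 1 ≤ K) :
    0 ≤ Real.exp (-c * ((K + 2 : ℕ) : ℝ) ^ 2) - 2 * Real.exp (-c * ((K + 1 : ℕ) : ℝ) ^ 2)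
      + Real.exp (-c * (K : ℝ) ^ 2) := by
  have hK' : (1 : ℝ) ≤ K := by exact_mod_cast hK
  have h1 : Real.exp (-c * (K : ℝ) ^ 2)
      = Real.exp (-c * ((K + 1 : ℕ) : ℝ) ^ 2) * Real.exp (c * (2 * K + 1)) := by
    rw [← Real.exp_add]
    congr 1
    push_cast
    ring
  have h2 : 2 ≤ Real.exp (c * (2 * K + 1)) := by
    have := Real.add_one_le_exp (c * (2 * K + 1))
    nlinarith
  have h3 := Real.exp_pos (-c * ((K + 1 : ℕ) : ℝ) ^ 2)
  have h4 := Real.exp_pos (-c * ((K + 2 : ℕ) : ℝ) ^ 2)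
  rw [h1]
  nlinarith

/-- Double summation by parts: if the second primitive `T` of `δ` is nonnegative and grows at most
quadratically, then `δ` has nonnegative sum against the (discretely convex) Gaussian weight. -/
lemma tsum_gauss_mul_nonneg {c : ℝ} (hc : 1 / 2 ≤ c) (δ T : ℕ → ℝ) (hT0 : T 0 = 0)
    (hT : ∀ M, T (M + 1) = T M + ∑ i ∈ Finset.range M, δ (i + 1))
    (hTn : ∀ M, 0 ≤ T M) (hTb : ∀ M, T M ≤ (M : ℝ) ^ 2)
    (hs : Summable fun i : ℕ => Real.exp (-c * ((i + 1 : ℕ) : ℝ) ^ 2) * δ (i + 1)) :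
    0 ≤ ∑' i : ℕ, Real.exp (-c * ((i + 1 : ℕ) : ℝ) ^ 2) * δ (i + 1) := by
  set g : ℕ → ℝ := fun k => Real.exp (-c * (k : ℝ) ^ 2) with hg
  have hgpos : ∀ k, 0 < g k := fun k => Real.exp_pos _
  have hT1 : T 1 = 0 := by rw [hT 0, hT0]; simp
  -- The boundary term after two summations by parts, with the nonnegative bulk term dropped.
  have hpart : ∀ K, g K * T (K + 1) - g (K + 1) * T K
      ≤ ∑ i ∈ Finset.range K, g (i + 1) * δ (i + 1) := by
    intro K
    induction K with
    | zero => simp [hT0, hT1]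
    | succ K ih =>
      rw [Finset.sum_range_succ]
      have hw : 0 ≤ (g (K + 2) - 2 * g (K + 1) + g K) * T (K + 1) := by
        rcases Nat.eq_zero_or_pos K with rfl | hK
        · simp [hT1]
        · exact mul_nonneg (gauss_second_diff_nonneg hc K hK) (hTn _)
      have hrec : T (K + 1 + 1) + T K = 2 * T (K + 1) + δ (K + 1) := by
        rw [hT (K + 1), Finset.sum_range_succ, hT K]
        ring
      have : T (K + 1 + 1) = 2 * T (K + 1) + δ (K + 1) - T K := by linarith
      rw [this]
      have e : g (K + 1 + 1) = g (K + 2) := rfl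
      rw [e]
      nlinarith
  have hlow : ∀ K : ℕ, -((K : ℝ) ^ 2 * Real.exp (-c * K))
      ≤ ∑ i ∈ Finset.range K, g (i + 1) * δ (i + 1) := by
    intro K
    refine le_trans ?_ (hpart K)
    have h1 : 0 ≤ g K * T (K + 1) := mul_nonneg (hgpos K).le (hTn _)
    have h2 : g (K + 1) ≤ Real.exp (-c * K) := by
      refine Real.exp_le_exp.mpr ?_
      have : (K : ℝ) ≤ ((K + 1 : ℕ) : ℝ) ^ 2 := by
        push_cast
        nlinarith [(K.cast_nonneg : (0 : ℝ) ≤ K)]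
      nlinarith
    have h3 : g (K + 1) * T K ≤ Real.exp (-c * K) * (K : ℝ) ^ 2 :=
      mul_le_mul h2 (hTb K) (hTn K) (Real.exp_pos _).le
    linarith
  have hlim : Filter.Tendsto (fun K : ℕ => -((K : ℝ) ^ 2 * Real.exp (-c * K))) Filter.atTop
      (nhds 0) := by
    simpa using (Real.summable_pow_mul_exp_neg_nat_mul 2 (r := c)
      (by linarith)).tendsto_atTop_zero.neg
  exact le_of_tendsto_of_tendsto' hlim hs.hasSum.tendsto_sum_nat hlow

/-- The cyclic word has the smallest Gaussian-weighted repetition frequency. -/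
lemma tsum_repeatFreq_le {X : Type*} (H : Finset X) {s sb : ℤ → X} {P : ℕ} (hP : 0 < P)
    (hH : 0 < H.card) (hsH : ∀ k, s k ∈ H) (hs : ∀ k, s (k + (P : ℤ)) = s k)
    (hsb : ∀ k l, sb k = sb l ↔ (H.card : ℤ) ∣ k - l) {c : ℝ} (hc : 1 / 2 ≤ c) :
    ∑' j : ℤ, Real.exp (-c * (j : ℝ) ^ 2) * repeatFreq sb H.card j
      ≤ ∑' j : ℤ, Real.exp (-c * (j : ℝ) ^ 2) * repeatFreq s P j := by
  have hsbp : ∀ k, sb (k + (H.card : ℤ)) = sb k := fun k => by rw [hsb]; simp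
  have hsum : ∀ (u : ℤ → X) (Q : ℕ), 0 < Q →
      Summable fun j : ℤ => Real.exp (-c * (j : ℝ) ^ 2) * repeatFreq u Q j := by
    intro u Q hQ
    refine Summable.of_nonneg_of_le
      (fun j => mul_nonneg (Real.exp_pos _).le (repeatFreq_nonneg _ _ _)) (fun j => ?_)
      (summable_int_gauss (c := c) (by linarith))
    exact mul_le_of_le_one_right (Real.exp_pos _).le (repeatFreq_le_one _ hQ _)
  rw [← sub_nonneg, ← (hsum s P hP).tsum_sub (hsum sb _ hH)]
  simp only [← mul_sub]
  set δ : ℕ → ℝ := fun j => repeatFreq s P j - repeatFreq sb H.card j with hδ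
  set F : ℤ → ℝ := fun j =>
    Real.exp (-c * (j : ℝ) ^ 2) * (repeatFreq s P j - repeatFreq sb H.card j) with hF
  have hFs : Summable F := by
    refine ((hsum s P hP).sub (hsum sb _ hH)).congr fun j => ?_
    simp only [hF]
    ring
  have hF0 : F 0 = 0 := by simp [hF, repeatFreq_zero _ hP, repeatFreq_zero _ hH]
  have hFnat : ∀ i : ℕ, F ((i + 1 : ℕ) : ℤ)
      = Real.exp (-c * ((i + 1 : ℕ) : ℝ) ^ 2) * δ (i + 1) := fun i => by
    simp only [hF, hδ, Int.cast_natCast]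
  have hFneg : ∀ j, F (-j) = F j := by
    intro j
    simp only [hF, repeatFreq_neg hs, repeatFreq_neg hsbp]
    simp
  have hFN : Summable fun n : ℕ => F n := hFs.comp_injective Nat.cast_injective
  have hFN' : Summable fun n : ℕ => F ((n + 1 : ℕ) : ℤ) :=
    (summable_nat_add_iff 1).mpr hFN
  have hmain : 0 ≤ ∑' n : ℕ, F ((n + 1 : ℕ) : ℤ) := by
    simp only [hFnat]
    refine tsum_gauss_mul_nonneg hc δ
      (fun M => (windowPairs s P M - windowPairs sb H.card M) / 2) ?_ ?_ ?_ ?_ ?_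
    · simp [windowPairs]
    · intro M
      simp only [windowPairs_succ hP hs, windowPairs_succ hH hsbp, hδ, Finset.sum_sub_distrib]
      push_cast
      ring
    · intro M
      have := windowPairs_cyclic_le H hP hH hsH hsb M
      linarith
    · intro M
      have h1 := windowPairs_nonneg sb H.card M
      have h2 := windowPairs_le s hP M
      have h3 := windowPairs_nonneg s P M
      linarith
    · simpa only [hFnat] using hFN'
  have hneg : ∀ n : ℕ, F (-((n : ℤ) + 1)) = F ((n + 1 : ℕ) : ℤ) := fun n => by
    rw [hFneg]; push_cast; rfl
  rw [tsum_of_nat_of_neg_add_one hFN (by simpa only [hneg] using hFN'), hFN.tsum_eq_zero_add]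
  simp only [hneg, Nat.cast_zero, hF0, zero_add]
  exact add_nonneg hmain hmain

end Abel

/-! ### The layered energy -/

section Energy

variable {m : ℕ} {N : Matrix (Fin m) (Fin m) ℝ}

lemma shiftedTheta_eq_tsum_lattice (a : ℝ) (hN : IsUnit N.det) {L0 : Set (Fin m → ℝ)}
    (hL0 : L0 = {v | ∃ k : Fin m → ℤ, v = N.mulVec (fun i => (k i : ℝ))}) (x : Fin m → ℝ) :
    shiftedTheta a N x = ∑' p : L0, Real.exp (-a * ∑ i, ((p : Fin m → ℝ) i + x i) ^ 2) := by
  let f : (Fin m → ℤ) → L0 := fun k => ⟨N.mulVec (fun i => (k i : ℝ)), by rw [hL0]; exact ⟨k, rfl⟩⟩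
  have hf : Function.Bijective f := by
    constructor
    · intro k l hkl
      have h1 : N.mulVec (fun i => (k i : ℝ)) = N.mulVec (fun i => (l i : ℝ)) :=
        congrArg Subtype.val hkl
      have h2 := Matrix.mulVec_injective_of_isUnit ((Matrix.isUnit_iff_isUnit_det N).mpr hN) h1
      ext i
      exact_mod_cast congrFun h2 i
    · rintro ⟨v, hv⟩
      have hv' := hv
      rw [hL0] at hv'
      obtain ⟨k, rfl⟩ := hv'
      exact ⟨k, rfl⟩
  rw [← (Equiv.ofBijective f hf).tsum_eq]
  refine tsum_congr fun k => ?_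
  simp [f, add_comm]

/-- By symmetry of `H`, the interaction of two layers takes only two values: one for equal
letters and one, no larger, for distinct letters. -/
lemma exists_two_level {a : ℝ} (ha : 0 < a) (hN : IsUnit N.det) (H : Finset (Fin m → ℝ))
    {L0 : Set (Fin m → ℝ)}
    (hL0 : L0 = {v | ∃ k : Fin m → ℤ, v = N.mulVec (fun i => (k i : ℝ))})
    (hsym : ∀ x ∈ H, ∀ y ∈ H, ∀ w ∈ H, ∀ z ∈ H, x ≠ y → w ≠ z →
      ∃ φ : L0 ≃ L0, ∀ p : L0,
        ∑ i, ((p : Fin m → ℝ) i + x i - y i) ^ 2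
          = ∑ i, ((φ p : Fin m → ℝ) i + w i - z i) ^ 2) :
    ∃ B D : ℝ, 0 ≤ D ∧ ∀ x ∈ H, ∀ y ∈ H, shiftedTheta a N (x - y) = B + D * eqInd x y := by
  by_cases hne : ∃ w ∈ H, ∃ z ∈ H, w ≠ z
  · obtain ⟨w, hw, z, hz, hwz⟩ := hne
    refine ⟨shiftedTheta a N (w - z), shiftedTheta a N 0 - shiftedTheta a N (w - z),
      sub_nonneg.mpr (shiftedTheta_le_zero ha hN _), fun x hx y hy => ?_⟩
    by_cases hxy : x = y
    · simp [hxy]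
    · obtain ⟨φ, hφ⟩ := hsym x hx y hy w hw z hz hxy hwz
      simp only [eqInd, if_neg hxy, mul_zero, add_zero]
      rw [shiftedTheta_eq_tsum_lattice a hN hL0, shiftedTheta_eq_tsum_lattice a hN hL0]
      conv_rhs => rw [← φ.tsum_eq]
      refine tsum_congr fun p => ?_
      have := hφ p
      simp only [add_sub_assoc] at this
      simp only [Pi.sub_apply, this]
  · push Not at hne
    refine ⟨shiftedTheta a N 0, 0, le_rfl, fun x hx y hy => ?_⟩
    simp [hne x hx y hy]

lemma mean_energy_eq {X : Type*} {c : ℝ} (hc : 0 < c) (B D : ℝ) (u : ℤ → X) {Q : ℕ}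
    (hQ : 0 < Q) :
    (1 / (Q : ℝ)) * ∑ h ∈ Finset.Icc (1 : ℤ) (Q : ℤ), ∑' k : ℤ,
        Real.exp (-c * ((h - k : ℤ) : ℝ) ^ 2) * (B + D * eqInd (u h) (u k))
      = B * ∑' j : ℤ, Real.exp (-c * (j : ℝ) ^ 2)
        + D * ∑' j : ℤ, Real.exp (-c * (j : ℝ) ^ 2) * repeatFreq u Q j := by
  have hg := summable_int_gauss hc
  have hsum : ∀ h : ℤ, Summable fun j : ℤ =>
      Real.exp (-c * (j : ℝ) ^ 2) * eqInd (u h) (u (h + j)) := fun h =>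
    Summable.of_nonneg_of_le (fun j => mul_nonneg (Real.exp_pos _).le (eqInd_nonneg _ _))
      (fun j => mul_le_of_le_one_right (Real.exp_pos _).le (eqInd_le_one _ _)) hg
  have hrow : ∀ h : ℤ, ∑' k : ℤ,
        Real.exp (-c * ((h - k : ℤ) : ℝ) ^ 2) * (B + D * eqInd (u h) (u k))
      = B * ∑' j : ℤ, Real.exp (-c * (j : ℝ) ^ 2)
        + D * ∑' j : ℤ, Real.exp (-c * (j : ℝ) ^ 2) * eqInd (u h) (u (h + j)) := by
    intro h
    rw [← tsum_mul_left, ← tsum_mul_left,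
      ← (hg.mul_left B).tsum_add ((hsum h).mul_left D), ← (Equiv.addLeft h).tsum_eq]
    refine tsum_congr fun j => ?_
    have : ((h - (Equiv.addLeft h) j : ℤ) : ℝ) ^ 2 = (j : ℝ) ^ 2 := by simp
    rw [this]
    simp only [Equiv.coe_addLeft]
    ring
  simp only [hrow]
  rw [Finset.sum_add_distrib, mul_add, mean_const hQ]
  congr 1
  rw [← Finset.mul_sum, ← Summable.tsum_finsetSum (fun h _ => hsum h), mul_left_comm,
    ← tsum_mul_left]
  congr 1
  refine tsum_congr fun j => ?_
  rw [repeatFreq, ← Finset.mul_sum]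
  ring

end Energy

/-- The `|H|`-periodic extension of a bijection repeats exactly at multiples of `|H|`. -/
lemma cyclic_eq_iff {X : Type*} (H : Finset X) (hH : 0 < H.card) {sb : ℤ → X}
    (hper : ∀ k, sb (k + (H.card : ℤ)) = sb k)
    (hbij : ∃ e : Fin H.card ≃ {x // x ∈ H}, ∀ j : Fin H.card, sb ((j : ℕ) : ℤ) = (e j : X))
    (k l : ℤ) : sb k = sb l ↔ (H.card : ℤ) ∣ k - l := by
  obtain ⟨e, he⟩ := hbij
  have hp : Function.Periodic sb (H.card : ℤ) := hper
  have hmod : ∀ k, sb k = sb (k % (H.card : ℤ)) := by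
    intro k
    have := hp.sub_zsmul_eq (k / (H.card : ℤ)) (x := k)
    rw [← this]
    congr 1
    rw [Int.emod_def, smul_eq_mul, mul_comm]
  have hcard : (0 : ℤ) < H.card := by exact_mod_cast hH
  have hval : ∀ k : ℤ, ∃ j : Fin H.card, ((j : ℕ) : ℤ) = k % (H.card : ℤ) := by
    intro k
    have h1 := Int.emod_nonneg k hcard.ne'
    have h2 := Int.emod_lt_of_pos k hcard
    exact ⟨⟨(k % (H.card : ℤ)).toNat, by omega⟩, by simp only; omega⟩
  rw [← Int.emod_eq_emod_iff_emod_sub_eq_zero.trans (Int.dvd_iff_emod_eq_zero).symm, hmod k,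
    hmod l]
  obtain ⟨i, hi⟩ := hval k
  obtain ⟨j, hj⟩ := hval l
  rw [← hi, ← hj, he, he]
  constructor
  · intro h
    rw [e.injective (Subtype.ext h)]
  · intro h
    rw [Fin.ext (by exact_mod_cast h : (i : ℕ) = j)]

/-- Optimality of the bijective layering `s_b` among all periodic layerings,
for `α ≥ 1/(2πt²)`.  The lattice is `Λ₀ = N·ℤ^{d-1}`, `H ⊂ ℝ^{d-1}` is a finite set with the
same symmetries as `Λ₀`, and the energy per point of a `P`-periodic layering `s` is
`(1/P) Σ_{h=1}^P Σ_{k∈ℤ} Σ_{p∈Λ₀} exp(−πα((h−k)²t² + |s(h)−s(k)+p|²))`. -/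
theorem layered_theta_minimal_bijective
    (d : ℕ) (hd : 2 ≤ d)
    (N : Matrix (Fin (d - 1)) (Fin (d - 1)) ℝ) (hN : IsUnit N.det)
    (H : Finset (Fin (d - 1) → ℝ))
    (L0 : Set (Fin (d - 1) → ℝ))
    (hL0 : L0 = {v | ∃ k : Fin (d - 1) → ℤ, v = N.mulVec (fun i => (k i : ℝ))})
    -- `H` has the same symmetries as `Λ₀`
    (hsym : ∀ x ∈ H, ∀ y ∈ H, ∀ w ∈ H, ∀ z ∈ H, x ≠ y → w ≠ z →
      ∃ φ : L0 ≃ L0, ∀ p : L0,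
        ∑ i, ((p : Fin (d - 1) → ℝ) i + x i - y i) ^ 2
          = ∑ i, ((φ p : Fin (d - 1) → ℝ) i + w i - z i) ^ 2)
    (t α : ℝ) (ht : 0 < t) (hα : 1 / (2 * Real.pi * t ^ 2) ≤ α)
    -- `sb` is the `|H|`-periodic extension of a bijection `b : {1,…,|H|} → H`
    (sb : ℤ → Fin (d - 1) → ℝ)
    (hsbH : ∀ k, sb k ∈ H)
    (hsb_per : ∀ k, sb (k + (H.card : ℤ)) = sb k)
    (hsb_bij : ∃ e : Fin H.card ≃ {x // x ∈ H},
      ∀ j : Fin H.card, sb ((j : ℕ) : ℤ) = (e j : Fin (d - 1) → ℝ))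
    -- `s` is an arbitrary `P`-periodic layering with values in `H`
    (s : ℤ → Fin (d - 1) → ℝ) (hsH : ∀ k, s k ∈ H)
    (P : ℕ) (hP : 0 < P) (hper : ∀ k, s (k + (P : ℤ)) = s k) :
    (1 / (H.card : ℝ)) * ∑ h ∈ Finset.Icc (1 : ℤ) (H.card : ℤ), ∑' k : ℤ,
        ∑' p : Fin (d - 1) → ℤ,
          Real.exp (-Real.pi * α * (((h - k : ℤ) : ℝ) ^ 2 * t ^ 2
            + ∑ i, (sb h i - sb k i + N.mulVec (fun j => (p j : ℝ)) i) ^ 2))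
    ≤ (1 / (P : ℝ)) * ∑ h ∈ Finset.Icc (1 : ℤ) (P : ℤ), ∑' k : ℤ,
        ∑' p : Fin (d - 1) → ℤ,
          Real.exp (-Real.pi * α * (((h - k : ℤ) : ℝ) ^ 2 * t ^ 2
            + ∑ i, (s h i - s k i + N.mulVec (fun j => (p j : ℝ)) i) ^ 2)) := by
  have hα0 : 0 < α := lt_of_lt_of_le (by positivity) hα
  have ha : 0 < Real.pi * α := by positivity
  set c : ℝ := Real.pi * α * t ^ 2 with hcdef
  have hc : 1 / 2 ≤ c := by
    rw [div_le_iff₀ (by positivity)] at hα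
    rw [hcdef]
    linarith
  have hc0 : 0 < c := by linarith
  have hH : 0 < H.card := Finset.card_pos.mpr ⟨s 0, hsH 0⟩
  obtain ⟨B, D, hD, hBD⟩ := exists_two_level ha hN H hL0 hsym
  have hlayer : ∀ u : ℤ → Fin (d - 1) → ℝ, (∀ k, u k ∈ H) → ∀ h k : ℤ,
      ∑' p : Fin (d - 1) → ℤ,
          Real.exp (-Real.pi * α * (((h - k : ℤ) : ℝ) ^ 2 * t ^ 2
            + ∑ i, (u h i - u k i + N.mulVec (fun j => (p j : ℝ)) i) ^ 2))
        = Real.exp (-c * ((h - k : ℤ) : ℝ) ^ 2) * (B + D * eqInd (u h) (u k)) := by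
    intro u hu h k
    rw [← hBD _ (hu h) _ (hu k), shiftedTheta, ← tsum_mul_left]
    refine tsum_congr fun p => ?_
    rw [← Real.exp_add]
    congr 1
    simp only [Pi.sub_apply]
    rw [hcdef]
    ring
  simp only [hlayer sb hsbH, hlayer s hsH]
  rw [mean_energy_eq hc0 B D sb hH, mean_energy_eq hc0 B D s hP]
  have key := tsum_repeatFreq_le H hP hH hsH hper (cyclic_eq_iff H hH hsb_per hsb_bij) hc
  gcongr
end

section
/- Let A₂ ⊂ ℝ² be the triangular lattice generated by (1,0) and (1/2,√3/2), and in ℝ² let a = (0,0), b = (1/2, 1/(2√3)), c = (0, 1/√3). Let s₁ : ℤ → ℝ² be the 3-periodic map with s₁(k) = a, b, c according as k ≡ 0, 1, 2 (mod 3) (giving the FCC-type layering), and let s₂ : ℤ → ℝ² be the 2-periodic map with s₂(k) = a, b according as k ≡ 0, 1 (mod 2) (giving the HCP-type layering). Then for every α > 0, t > 0 and ℓ > 0, the average Gaussian energies per point satisfy the strict inequality (1/3) Σ_{h=1}^{3} Σ_{k∈ℤ} Σ_{p∈A₂} exp(−πα((h−k)²t² + ℓ²|s₁(h)−s₁(k)+p|²))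 < (1/2) Σ_{h=1}^{2} Σ_{k∈ℤ} Σ_{p∈A₂} exp(−πα((h−k)²t² + ℓ²|s₂(h)−s₂(k)+p|²)). In particular the FCC lattice has strictly smaller Gaussian energy than the HCP configuration of the same density, for all α > 0. -/
/-!
Write `θ_γ(x) = ∑ₙ exp (-πγ(n+x)²)`.  A layer at horizontal shift `v` contributes
`Θ(v) = ∑_{p ∈ A₂} exp (-παℓ²|v+p|²)`, and `Θ` takes only two values on differences of the
shifts `a, b, c`: `A = Θ(0)` and `B = Θ(±b) = Θ(±c) = Θ(±(b-c))`.  Two FCC layers are aligned exactly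
when their heights differ by a multiple of 3, two HCP layers when they differ by a multiple of 2, so
with `γ = αt²` the energies are `B θ_γ(0) + (A-B) θ_{9γ}(0)` and `B θ_γ(0) + (A-B) θ_{4γ}(0)`
(`tsum_layers`).  Since `θ_γ(0)` strictly decreases in `γ`, everything reduces to `B < A`.

Splitting `A₂` into two rectangular lattices (`hasSum_planar`) gives, with `β = αℓ²`,
`A = θ_β(0) θ_{3β}(0) + θ_β(1/2) θ_{3β}(1/2)` and `B = θ_β(0) θ_{3β}(1/3) + θ_β(1/2) θ_{3β}(1/6)`.
Put `P = θ_{3β}(0) - θ_{3β}(1/3)` and `Q = θ_{3β}(1/6) - θ_{3β}(1/2)`, so that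
`A - B = θ_β(0) P - θ_β(1/2) Q`.  By Poisson summation `θ_γ` has positive Fourier coefficients, hence
is maximal at `0`, strictly so against `1/3`; this gives `θ_β(1/2) ≤ θ_β(0)`, `P > 0`, and, by the
duplication formula `θ_γ(x) + θ_γ(x+1/2) = θ_{γ/4}(2x)`, also
`P - Q = θ_{3β/4}(0) - θ_{3β/4}(1/3) > 0`.
-/

open scoped BigOperators

/-! ### One-dimensional theta functions -/

lemma hasSum_of_eq {ι : Type*} {f g : ι → ℝ} {a : ℝ} (hg : HasSum g a) (h : ∀ i, f i = g i) :
    HasSum f a := by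
  rwa [funext h]

/-- The periodized Gaussian `θ_γ(x) = ∑ₙ exp (-πγ(n+x)²)`, meaningful for `γ > 0`; it is Mathlib's
even Hurwitz kernel, viewed as a function of a real variable. -/
noncomputable def theta (γ x : ℝ) : ℝ := HurwitzZeta.evenKernel (x : UnitAddCircle) γ

lemma hasSum_theta {γ : ℝ} (hγ : 0 < γ) (x : ℝ) :
    HasSum (fun n : ℤ ↦ Real.exp (-Real.pi * γ * (n + x) ^ 2)) (theta γ x) := by
  unfold theta
  convert HurwitzZeta.hasSum_int_evenKernel x hγ using 3
  ring

lemma theta_neg (γ x : ℝ) : theta γ (-x) = theta γ x := by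
  simp [theta]

lemma theta_add_one (γ x : ℝ) : theta γ (x + 1) = theta γ x := by
  simp [theta]

lemma theta_one_sub (γ x : ℝ) : theta γ (1 - x) = theta γ x := by
  rw [← theta_neg γ x, ← theta_add_one γ (-x)]
  congr 1
  ring

lemma theta_pos {γ : ℝ} (hγ : 0 < γ) (x : ℝ) : 0 < theta γ x :=
  hasSum_lt (i := 0) (fun _ ↦ (Real.exp_pos _).le) (Real.exp_pos _) hasSum_zero (hasSum_theta hγ x)

/-- By the functional equation, `θ_γ(x)` is a cosine series in `x` with positive coefficients. -/
lemma theta_le_zero {γ : ℝ} (hγ : 0 < γ) (x : ℝ) : theta γ x ≤ theta γ 0 := by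
  unfold theta
  rw [HurwitzZeta.evenKernel_functional_equation, HurwitzZeta.evenKernel_functional_equation]
  have h1 := HurwitzZeta.hasSum_nat_cosKernel₀ x (one_div_pos.mpr hγ)
  have h0 := HurwitzZeta.hasSum_nat_cosKernel₀ 0 (one_div_pos.mpr hγ)
  have hle := hasSum_le (fun n ↦ ?_) h1 h0
  · exact mul_le_mul_of_nonneg_left (by linarith) (by positivity)
  · have := Real.cos_le_one (2 * Real.pi * x * (n + 1))
    simp only [mul_zero, zero_mul, Real.cos_zero]
    gcongr

/-- The first Fourier mode makes the maximum at `0` strict against `1/3`. -/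
lemma theta_third_lt_zero {γ : ℝ} (hγ : 0 < γ) : theta γ (1 / 3) < theta γ 0 := by
  unfold theta
  rw [HurwitzZeta.evenKernel_functional_equation, HurwitzZeta.evenKernel_functional_equation]
  have h1 := HurwitzZeta.hasSum_nat_cosKernel₀ (1 / 3) (one_div_pos.mpr hγ)
  have h0 := HurwitzZeta.hasSum_nat_cosKernel₀ 0 (one_div_pos.mpr hγ)
  have hlt := hasSum_lt (i := 0) (fun n ↦ ?_) ?_ h1 h0
  · exact mul_lt_mul_of_pos_left (by linarith) (by positivity)
  · have := Real.cos_le_one (2 * Real.pi * (1 / 3) * (n + 1))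
    simp only [mul_zero, zero_mul, Real.cos_zero]
    gcongr
  · have hcos : Real.cos (2 * Real.pi * (1 / 3) * (((0 : ℕ) : ℝ) + 1)) < 1 := by
      nth_rewrite 3 [← Real.cos_zero]
      apply Real.cos_lt_cos_of_nonneg_of_le_pi le_rfl <;> push_cast <;> linarith [Real.pi_pos]
    simp only [mul_zero, zero_mul, Real.cos_zero]
    gcongr

lemma theta_zero_anti {γ δ : ℝ} (hγ : 0 < γ) (h : γ < δ) : theta δ 0 < theta γ 0 := by
  refine hasSum_lt (i := 1) (fun n ↦ ?_) ?_ (hasSum_theta (hγ.trans h) 0) (hasSum_theta hγ 0)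
  · apply Real.exp_le_exp.mpr
    have : 0 ≤ (δ - γ) * (Real.pi * ((n : ℝ) + 0) ^ 2) :=
      mul_nonneg (by linarith) (by positivity)
    linarith
  · apply Real.exp_lt_exp.mpr
    have : 0 < (δ - γ) * Real.pi := mul_pos (by linarith) Real.pi_pos
    push_cast
    linarith

/-- Duplication formula: the even and odd multiples of `1/2` are two translates of `ℤ`. -/
lemma theta_dup {γ : ℝ} (hγ : 0 < γ) (x : ℝ) :
    theta γ x + theta γ (x + 1 / 2) = theta (γ / 4) (2 * x) := by
  have he : Function.Injective (fun n : ℤ ↦ 2 * n) := fun a b h ↦ by simpa using h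
  have ho : Function.Injective (fun n : ℤ ↦ 2 * n + 1) := fun a b h ↦ by simpa using h
  have hc : IsCompl (Set.range fun n : ℤ ↦ 2 * n) (Set.range fun n : ℤ ↦ 2 * n + 1) := by
    have := Int.isCompl_even_odd
    rwa [show {n : ℤ | Even n} = Set.range fun n : ℤ ↦ 2 * n by
        ext; simp [even_iff_exists_two_mul],
      show {n : ℤ | Odd n} = Set.range fun n : ℤ ↦ 2 * n + 1 by
        ext; simp [Odd]] at this
  refine HasSum.unique (HasSum.add_isCompl hc (he.hasSum_range_iff.mpr ?_)
    (ho.hasSum_range_iff.mpr ?_)) (hasSum_theta (by positivity) (2 * x))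
  · convert hasSum_theta hγ x using 3
    simp only [Function.comp_apply]
    push_cast
    ring_nf
  · convert hasSum_theta hγ (x + 1 / 2) using 3
    simp only [Function.comp_apply]
    push_cast
    ring_nf

/-! ### Gaussian sums over translates of the triangular lattice -/

/-- Index pairs `(m, n)` with `n` even and with `n` odd; shearing `m` by `-⌊n/2⌋` cancels the
horizontal offset `n/2` of the `n`-th row of `A₂` up to `0` or `1/2`. -/
lemma isCompl_rows : IsCompl (Set.range fun p : ℤ × ℤ ↦ (p.1 - p.2, 2 * p.2))
    (Set.range fun p : ℤ × ℤ ↦ (p.1 - p.2, 2 * p.2 + 1)) := by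
  constructor
  · rw [Set.disjoint_left]
    rintro _ ⟨p, rfl⟩ ⟨q, hq⟩
    simp only [Prod.mk.injEq] at hq
    omega
  · rw [codisjoint_iff_le_sup]
    rintro ⟨m, n⟩ -
    rcases Int.even_or_odd' n with ⟨j, rfl | rfl⟩
    · exact Or.inl ⟨(m + j, j), by simp⟩
    · exact Or.inr ⟨(m + j, j), by simp⟩

lemma hasSum_rows {F : ℤ × ℤ → ℝ} {a b : ℝ}
    (ha : HasSum (fun p : ℤ × ℤ ↦ F (p.1 - p.2, 2 * p.2)) a)
    (hb : HasSum (fun p : ℤ × ℤ ↦ F (p.1 - p.2, 2 * p.2 + 1)) b) : HasSum F (a + b) := by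
  have he : Function.Injective (fun p : ℤ × ℤ ↦ (p.1 - p.2, 2 * p.2)) := by
    rintro ⟨a, b⟩ ⟨c, d⟩ h
    simp only [Prod.mk.injEq] at h ⊢
    omega
  have ho : Function.Injective (fun p : ℤ × ℤ ↦ (p.1 - p.2, 2 * p.2 + 1)) := by
    rintro ⟨a, b⟩ ⟨c, d⟩ h
    simp only [Prod.mk.injEq] at h ⊢
    omega
  exact HasSum.add_isCompl isCompl_rows (he.hasSum_range_iff.mpr ha) (ho.hasSum_range_iff.mpr hb)

lemma hasSum_theta_mul {β : ℝ} (hβ : 0 < β) (x y : ℝ) :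
    HasSum (fun p : ℤ × ℤ ↦ Real.exp (-Real.pi * β * (p.1 + x) ^ 2) *
      Real.exp (-Real.pi * (3 * β) * (p.2 + y) ^ 2)) (theta β x * theta (3 * β) y) := by
  have hx := hasSum_theta hβ x
  have hy := hasSum_theta (by positivity : 0 < 3 * β) y
  exact hx.mul hy (hx.summable.mul_of_nonneg hy.summable
    (fun _ ↦ (Real.exp_pos _).le) (fun _ ↦ (Real.exp_pos _).le))

/-- The rows of `A₂` of even index form the rectangular lattice `ℤ × √3ℤ`, those of odd index its
translate by `(1/2, √3/2)`. -/
lemma hasSum_planar {β : ℝ} (hβ : 0 < β) (u w : ℝ) :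
    HasSum (fun p : ℤ × ℤ ↦ Real.exp (-Real.pi * β *
        ((u + ((p.1 : ℝ) + (p.2 : ℝ) / 2)) ^ 2 + (√3 * w + (p.2 : ℝ) * √3 / 2) ^ 2)))
      (theta β u * theta (3 * β) w + theta β (u + 1 / 2) * theta (3 * β) (w + 1 / 2)) := by
  have h3 : (√3) ^ 2 = 3 := Real.sq_sqrt (by norm_num)
  refine hasSum_rows (hasSum_of_eq (hasSum_theta_mul hβ u w) fun p ↦ ?_)
    (hasSum_of_eq (hasSum_theta_mul hβ (u + 1 / 2) (w + 1 / 2)) fun p ↦ ?_)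
  · rw [← Real.exp_add, Real.exp_eq_exp]
    push_cast
    linear_combination (-Real.pi * β * (w + p.2) ^ 2) * h3
  · rw [← Real.exp_add, Real.exp_eq_exp]
    push_cast
    linear_combination (-Real.pi * β * (w + p.2 + 1 / 2) ^ 2) * h3

/-- `Θ(0)`: the contribution of a layer aligned with the reference point. -/
noncomputable def alignedSum (β : ℝ) : ℝ :=
  theta β 0 * theta (3 * β) 0 + theta β (1 / 2) * theta (3 * β) (1 / 2)

/-- `Θ(±b) = Θ(±c) = Θ(±(b-c))`: the contribution of a layer centred on a hole of the lattice. -/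
noncomputable def holeSum (β : ℝ) : ℝ :=
  theta β 0 * theta (3 * β) (1 / 3) + theta β (1 / 2) * theta (3 * β) (1 / 6)

lemma holeSum_lt_alignedSum {β : ℝ} (hβ : 0 < β) : holeSum β < alignedSum β := by
  have h3 : 0 < 3 * β := by positivity
  have hP := theta_third_lt_zero h3
  have hf := theta_le_zero hβ (1 / 2)
  have hf0 := theta_pos hβ 0
  have hf1 := theta_pos hβ (1 / 2)
  have hPQ : theta (3 * β) (1 / 6) - theta (3 * β) (1 / 2)
      < theta (3 * β) 0 - theta (3 * β) (1 / 3) := by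
    have d0 := theta_dup h3 0
    have d1 := theta_dup h3 (1 / 6)
    have hlt := theta_third_lt_zero (by positivity : 0 < 3 * β / 4)
    have e : theta (3 * β) (1 / 6 + 1 / 2) = theta (3 * β) (1 / 3) := by
      rw [← theta_one_sub]
      norm_num
    rw [e] at d1
    norm_num at d0 d1 hlt ⊢
    linarith
  unfold holeSum alignedSum
  rcases le_total (theta (3 * β) (1 / 6) - theta (3 * β) (1 / 2)) 0 with hQ | hQ
  · nlinarith [mul_pos hf0 (sub_pos.mpr hP), mul_nonneg hf1.le (neg_nonneg.mpr hQ)]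
  · nlinarith [mul_pos hf0 (sub_pos.mpr hPQ), mul_nonneg hQ (sub_nonneg.mpr hf)]

/-- The value of `hasSum_planar` at the shift `0`. -/
lemma planar_aligned (β : ℝ) :
    theta β 0 * theta (3 * β) 0 + theta β (0 + 1 / 2) * theta (3 * β) (0 + 1 / 2)
      = alignedSum β := by
  simp [alignedSum]

/-- The values of `hasSum_planar` at `b, c, b-c` and their negatives, in the coordinates `(u, √3 w)`. -/
lemma planar_hole (β : ℝ) {u w : ℝ}
    (h : (u = 1 / 2 ∧ w = 1 / 6) ∨ (u = 0 ∧ w = 1 / 3) ∨ (u = 1 / 2 ∧ w = -1 / 6) ∨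
      (u = -1 / 2 ∧ w = -1 / 6) ∨ (u = 0 ∧ w = -1 / 3) ∨ (u = -1 / 2 ∧ w = 1 / 6)) :
    theta β u * theta (3 * β) w + theta β (u + 1 / 2) * theta (3 * β) (w + 1 / 2)
      = holeSum β := by
  have n2 : theta β (-1 / 2) = theta β (1 / 2) := by rw [← theta_neg]; norm_num
  have p2 : theta β (1 / 2 + 1 / 2) = theta β 0 := by rw [← theta_one_sub]; norm_num
  have q2 : theta β (-1 / 2 + 1 / 2) = theta β 0 := by norm_num
  have n6 : theta (3 * β) (-1 / 6) = theta (3 * β) (1 / 6) := by rw [← theta_neg]; norm_num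
  have n3 : theta (3 * β) (-1 / 3) = theta (3 * β) (1 / 3) := by rw [← theta_neg]; norm_num
  have p6 : theta (3 * β) (1 / 6 + 1 / 2) = theta (3 * β) (1 / 3) := by
    rw [← theta_one_sub]; norm_num
  have p3 : theta (3 * β) (1 / 3 + 1 / 2) = theta (3 * β) (1 / 6) := by
    rw [← theta_one_sub]; norm_num
  have q6 : theta (3 * β) (-1 / 6 + 1 / 2) = theta (3 * β) (1 / 3) := by norm_num
  have q3 : theta (3 * β) (-1 / 3 + 1 / 2) = theta (3 * β) (1 / 6) := by norm_num
  unfold holeSum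
  rcases h with ⟨rfl, rfl⟩ | ⟨rfl, rfl⟩ | ⟨rfl, rfl⟩ | ⟨rfl, rfl⟩ | ⟨rfl, rfl⟩ | ⟨rfl, rfl⟩ <;>
    simp only [zero_add, n2, p2, q2, n6, n3, p6, p3, q6, q3] <;> ring

/-! ### Summation over the layers -/

/-- Energy of one point when the layers at height difference divisible by `N` contribute `A` and
all others `B`. -/
lemma tsum_layers {γ : ℝ} (hγ : 0 < γ) (N : ℤ) (hN : N ≠ 0) (A B : ℝ) (h : ℤ) :
    ∑' k : ℤ, Real.exp (-Real.pi * γ * ((h - k : ℤ) : ℝ) ^ 2) * (if N ∣ h - k then A else B)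
      = B * theta γ 0 + (A - B) * theta (N ^ 2 * γ) 0 := by
  refine ((Equiv.subLeft h).tsum_eq
    (fun j : ℤ ↦ Real.exp (-Real.pi * γ * (j : ℝ) ^ 2) * (if N ∣ j then A else B))).trans ?_
  apply HasSum.tsum_eq
  have hNR : (N : ℝ) ≠ 0 := by exact_mod_cast hN
  have h1 : HasSum (fun j : ℤ ↦ Real.exp (-Real.pi * γ * (j : ℝ) ^ 2)) (theta γ 0) := by
    simpa using hasSum_theta hγ 0
  have h2 : HasSum (fun j : ℤ ↦ if N ∣ j then Real.exp (-Real.pi * γ * (j : ℝ) ^ 2) else 0)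
      (theta (N ^ 2 * γ) 0) := by
    have hinj : Function.Injective (fun j : ℤ ↦ N * j) := mul_right_injective₀ hN
    rw [← hinj.hasSum_iff]
    · convert hasSum_theta (by positivity : 0 < (N : ℝ) ^ 2 * γ) 0 using 2 with j
      simp only [Function.comp_apply, dvd_mul_right, if_true]
      push_cast
      ring_nf
    · intro j hj
      rw [if_neg]
      rintro ⟨i, rfl⟩
      exact hj ⟨i, rfl⟩
  refine hasSum_of_eq ((h1.mul_left B).add (h2.mul_left (A - B))) fun j ↦ ?_
  split_ifs <;> ring

/-- The FCC-type layering `s₁` (3-periodic, shifts a,b,c) of the triangular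
lattice `A₂` has strictly smaller average Gaussian energy per point than the HCP-type
layering `s₂` (2-periodic, shifts a,b), for all `α, t, ℓ > 0`. Here
`a = (0,0)`, `b = (1/2, 1/(2√3))`, `c = (0, 1/√3)`, and points of `A₂` are
`(m + n/2, n·√3/2)` for `(m,n) ∈ ℤ²`. -/
theorem fcc_lt_hcp
    (α t ℓ : ℝ) (hα : 0 < α) (ht : 0 < t) (hℓ : 0 < ℓ)
    (s1 s2 : ℤ → ℝ × ℝ)
    (hs1 : ∀ k : ℤ, s1 k =
      if k % 3 = 0 then ((0 : ℝ), (0 : ℝ))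
      else if k % 3 = 1 then ((1 / 2 : ℝ), 1 / (2 * Real.sqrt 3))
      else ((0 : ℝ), 1 / Real.sqrt 3))
    (hs2 : ∀ k : ℤ, s2 k =
      if k % 2 = 0 then ((0 : ℝ), (0 : ℝ))
      else ((1 / 2 : ℝ), 1 / (2 * Real.sqrt 3))) :
    (1 / 3 : ℝ) * ∑ h ∈ Finset.Icc (1 : ℤ) 3, ∑' k : ℤ, ∑' p : ℤ × ℤ,
        Real.exp (-Real.pi * α * (((h - k : ℤ) : ℝ) ^ 2 * t ^ 2
          + ℓ ^ 2 * (((s1 h).1 - (s1 k).1 + ((p.1 : ℝ) + (p.2 : ℝ) / 2)) ^ 2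
                   + ((s1 h).2 - (s1 k).2 + (p.2 : ℝ) * Real.sqrt 3 / 2) ^ 2)))
    < (1 / 2 : ℝ) * ∑ h ∈ Finset.Icc (1 : ℤ) 2, ∑' k : ℤ, ∑' p : ℤ × ℤ,
        Real.exp (-Real.pi * α * (((h - k : ℤ) : ℝ) ^ 2 * t ^ 2
          + ℓ ^ 2 * (((s2 h).1 - (s2 k).1 + ((p.1 : ℝ) + (p.2 : ℝ) / 2)) ^ 2
                   + ((s2 h).2 - (s2 k).2 + (p.2 : ℝ) * Real.sqrt 3 / 2) ^ 2))) := by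
  have hβ : 0 < α * ℓ ^ 2 := by positivity
  have hγ : 0 < α * t ^ 2 := by positivity
  have h3 : √3 * √3 = 3 := Real.mul_self_sqrt (by norm_num)
  have hb : 1 / (2 * √3) = √3 * (1 / 6) := by
    field_simp
    linarith
  have hc : 1 / √3 = √3 * (1 / 3) := by
    field_simp
    linarith
  have hlayer (h k : ℤ) (x y : ℝ × ℝ) (u w : ℝ) (hu : x.1 - y.1 = u) (hw : x.2 - y.2 = √3 * w) :
      ∑' p : ℤ × ℤ, Real.exp (-Real.pi * α * (((h - k : ℤ) : ℝ) ^ 2 * t ^ 2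
          + ℓ ^ 2 * ((x.1 - y.1 + ((p.1 : ℝ) + (p.2 : ℝ) / 2)) ^ 2
                   + (x.2 - y.2 + (p.2 : ℝ) * √3 / 2) ^ 2)))
        = Real.exp (-Real.pi * (α * t ^ 2) * ((h - k : ℤ) : ℝ) ^ 2) *
          (theta (α * ℓ ^ 2) u * theta (3 * (α * ℓ ^ 2)) w
            + theta (α * ℓ ^ 2) (u + 1 / 2) * theta (3 * (α * ℓ ^ 2)) (w + 1 / 2)) := by
    rw [hu, hw, ← (hasSum_planar hβ u w).tsum_eq, ← tsum_mul_left]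
    congr 1 with p
    rw [← Real.exp_add]
    ring_nf
  have e1 (h : ℤ) := tsum_layers hγ 3 (by norm_num) (alignedSum (α * ℓ ^ 2)) (holeSum (α * ℓ ^ 2)) h
  have e2 (h : ℤ) := tsum_layers hγ 2 (by norm_num) (alignedSum (α * ℓ ^ 2)) (holeSum (α * ℓ ^ 2)) h
  have f1 (h k : ℤ) : ∑' p : ℤ × ℤ, Real.exp (-Real.pi * α * (((h - k : ℤ) : ℝ) ^ 2 * t ^ 2
          + ℓ ^ 2 * (((s1 h).1 - (s1 k).1 + ((p.1 : ℝ) + (p.2 : ℝ) / 2)) ^ 2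
                   + ((s1 h).2 - (s1 k).2 + (p.2 : ℝ) * √3 / 2) ^ 2)))
        = Real.exp (-Real.pi * (α * t ^ 2) * ((h - k : ℤ) : ℝ) ^ 2) *
          (if 3 ∣ h - k then alignedSum (α * ℓ ^ 2) else holeSum (α * ℓ ^ 2)) := by
    by_cases hd : 3 ∣ h - k
    · have hs : s1 h = s1 k := by
        rw [hs1, hs1, show h % 3 = k % 3 by omega]
      rw [if_pos hd, ← planar_aligned, hlayer h k (s1 h) (s1 k) 0 0 (by simp [hs]) (by simp [hs])]
    · rw [if_neg hd]
      have hcases : (h % 3 = 1 ∧ k % 3 = 0) ∨ (h % 3 = 2 ∧ k % 3 = 0) ∨ (h % 3 = 1 ∧ k % 3 = 2) ∨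
          (h % 3 = 0 ∧ k % 3 = 1) ∨ (h % 3 = 0 ∧ k % 3 = 2) ∨ (h % 3 = 2 ∧ k % 3 = 1) := by omega
      have hval : ∃ u w : ℝ, (s1 h).1 - (s1 k).1 = u ∧ (s1 h).2 - (s1 k).2 = √3 * w ∧
          ((u = 1 / 2 ∧ w = 1 / 6) ∨ (u = 0 ∧ w = 1 / 3) ∨ (u = 1 / 2 ∧ w = -1 / 6) ∨
          (u = -1 / 2 ∧ w = -1 / 6) ∨ (u = 0 ∧ w = -1 / 3) ∨ (u = -1 / 2 ∧ w = 1 / 6)) := by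
        rw [hs1, hs1, hb, hc]
        rcases hcases with ⟨hh, hk⟩ | ⟨hh, hk⟩ | ⟨hh, hk⟩ | ⟨hh, hk⟩ | ⟨hh, hk⟩ | ⟨hh, hk⟩
        · exact ⟨1 / 2, 1 / 6, by norm_num [hh, hk], by norm_num [hh, hk], by norm_num⟩
        · exact ⟨0, 1 / 3, by norm_num [hh, hk], by norm_num [hh, hk], by norm_num⟩
        · exact ⟨1 / 2, -1 / 6, by norm_num [hh, hk], by norm_num [hh, hk]; ring, by norm_num⟩
        · exact ⟨-1 / 2, -1 / 6, by norm_num [hh, hk], by norm_num [hh, hk]; try ring, by norm_num⟩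
        · exact ⟨0, -1 / 3, by norm_num [hh, hk], by norm_num [hh, hk]; try ring, by norm_num⟩
        · exact ⟨-1 / 2, 1 / 6, by norm_num [hh, hk], by norm_num [hh, hk]; ring, by norm_num⟩
      obtain ⟨u, w, hu, hw, huw⟩ := hval
      rw [hlayer h k (s1 h) (s1 k) u w hu hw, planar_hole _ huw]
  have f2 (h k : ℤ) : ∑' p : ℤ × ℤ, Real.exp (-Real.pi * α * (((h - k : ℤ) : ℝ) ^ 2 * t ^ 2
          + ℓ ^ 2 * (((s2 h).1 - (s2 k).1 + ((p.1 : ℝ) + (p.2 : ℝ) / 2)) ^ 2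
                   + ((s2 h).2 - (s2 k).2 + (p.2 : ℝ) * √3 / 2) ^ 2)))
        = Real.exp (-Real.pi * (α * t ^ 2) * ((h - k : ℤ) : ℝ) ^ 2) *
          (if 2 ∣ h - k then alignedSum (α * ℓ ^ 2) else holeSum (α * ℓ ^ 2)) := by
    by_cases hd : 2 ∣ h - k
    · have hs : s2 h = s2 k := by
        rw [hs2, hs2, show h % 2 = k % 2 by omega]
      rw [if_pos hd, ← planar_aligned, hlayer h k (s2 h) (s2 k) 0 0 (by simp [hs]) (by simp [hs])]
    · rw [if_neg hd]
      have hcases : (h % 2 = 1 ∧ k % 2 = 0) ∨ (h % 2 = 0 ∧ k % 2 = 1) := by omega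
      have hval : ∃ u w : ℝ, (s2 h).1 - (s2 k).1 = u ∧ (s2 h).2 - (s2 k).2 = √3 * w ∧
          ((u = 1 / 2 ∧ w = 1 / 6) ∨ (u = 0 ∧ w = 1 / 3) ∨ (u = 1 / 2 ∧ w = -1 / 6) ∨
          (u = -1 / 2 ∧ w = -1 / 6) ∨ (u = 0 ∧ w = -1 / 3) ∨ (u = -1 / 2 ∧ w = 1 / 6)) := by
        rw [hs2, hs2, hb]
        rcases hcases with ⟨hh, hk⟩ | ⟨hh, hk⟩
        · exact ⟨1 / 2, 1 / 6, by norm_num [hh, hk], by norm_num [hh, hk], by norm_num⟩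
        · exact ⟨-1 / 2, -1 / 6, by norm_num [hh, hk], by norm_num [hh, hk]; try ring, by norm_num⟩
      obtain ⟨u, w, hu, hw, huw⟩ := hval
      rw [hlayer h k (s2 h) (s2 k) u w hu hw, planar_hole _ huw]
  simp only [f1, f2, e1, e2, Finset.sum_const, Int.card_Icc, nsmul_eq_mul]
  have hθ := theta_zero_anti (γ := (2 : ℤ) ^ 2 * (α * t ^ 2)) (δ := (3 : ℤ) ^ 2 * (α * t ^ 2))
    (by positivity) (by push_cast; linarith)
  have hAB := holeSum_lt_alignedSum hβ
  have := mul_lt_mul_of_pos_left hθ (sub_pos.mpr hAB)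
  rw [show ((3 : ℤ) + 1 - 1).toNat = 3 from rfl, show ((2 : ℤ) + 1 - 1).toNat = 2 from rfl]
  push_cast at this ⊢
  linear_combination this
end

section
/- For any dimension d ≥ 1, any Bravais lattice Λ = Mℤ^d (M an invertible real d×d matrix), any vector u ∈ ℝ^d and any α > 0, one has θ_{Λ+u}(α) ≤ θ_Λ(α), with equality if and only if u ∈ Λ. Equivalently, for fixed Λ and α, the set of maximizers of u ↦ θ_{Λ+u}(α) is exactly Λ. -/
/-!
Write `Q y = |M y|²` and `T β x = ∑_{k ∈ ℤ^d} exp (-β Q (k + x))`, so that the theta function of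
`Λ + M x` at `α` is `T (π α) x`. No Poisson summation is needed; the proof rests on a duplication
formula. The parallelogram law for `Q` and the change of variables `k = a + b + c`, `l = a - b`,
with `a, b ∈ ℤ^d` and `c ∈ {0, 1}^d`, give
`T β x * T β y = ∑_c T (2β) (c/2 + (x+y)/2) * T (2β) (c/2 + (x-y)/2)` (`thetaQ_mul`).

Specializing `(x, y)` to `(0, 0)`, `(x, -x)` and `(2x, 0)` and expanding squares yields
`∑_c (T (2β) (c/2) - T (2β) (c/2 + x))² = T β 0 ² - 2 T β x ² + T β (2x) * T β 0`
(`sum_sq_sub`). As the left-hand side is nonnegative, the supremum `S` of the bounded function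
`T β` satisfies `2 S² ≤ T β 0 ² + S * T β 0`, hence `S ≤ T β 0`; this is the inequality.

If `T β x = T β 0`, the right-hand side is at most `0`, so every square vanishes, and `c = 0` gives
`T (2β) x = T (2β) 0`. By iteration, `T (2^n β) x = T (2^n β) 0 ≥ 1` for all `n`. When `x ∉ ℤ^d`
all the exponents `Q (k + x)` are positive, so `T (2^n β) x → 0` by dominated convergence, which is
a contradiction.
-/

open scoped BigOperators

/-- The translated lattice theta function
`θ_{MZ^d + u}(α) = Σ_{k∈ℤ^d} exp(−πα|Mk+u|²)`. -/
noncomputable def latTheta (d : ℕ) (M : Matrix (Fin d) (Fin d) ℝ)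
    (u : Fin d → ℝ) (α : ℝ) : ℝ :=
  ∑' k : Fin d → ℤ,
    Real.exp (-Real.pi * α * ∑ i, (M.mulVec (fun j => (k j : ℝ)) i + u i) ^ 2)

open Filter Topology

namespace LatTheta

variable {d : ℕ}

/-- The quadratic form `y ↦ |M y|²`. -/
noncomputable def quad (M : Matrix (Fin d) (Fin d) ℝ) (y : Fin d → ℝ) : ℝ :=
  ∑ i, (M.mulVec y i) ^ 2

/-- The inclusion of `ℤ^d` into `ℝ^d`. -/
def toReal (k : Fin d → ℤ) : Fin d → ℝ := fun j => (k j : ℝ)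

/-- The theta function in lattice coordinates: `thetaQ M β x = ∑_k exp (-β |M (k + x)|²)`. -/
noncomputable def thetaQ (M : Matrix (Fin d) (Fin d) ℝ) (β : ℝ) (x : Fin d → ℝ) : ℝ :=
  ∑' k : Fin d → ℤ, Real.exp (-β * quad M (toReal k + x))

/-! ### The quadratic form -/

lemma quad_nonneg (M : Matrix (Fin d) (Fin d) ℝ) (y : Fin d → ℝ) : 0 ≤ quad M y :=
  Finset.sum_nonneg fun _ _ => sq_nonneg _

/-- The parallelogram law, normalized to half-sums and half-differences. -/
lemma quad_parallelogram (M : Matrix (Fin d) (Fin d) ℝ) (x y : Fin d → ℝ) :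
    quad M x + quad M y
      = 2 * quad M ((1 / 2 : ℝ) • (x + y)) + 2 * quad M ((1 / 2 : ℝ) • (x - y)) := by
  simp only [quad, Matrix.mulVec_smul, Matrix.mulVec_add, Matrix.mulVec_sub, Finset.mul_sum,
    ← Finset.sum_add_distrib]
  refine Finset.sum_congr rfl fun i _ => ?_
  simp only [Pi.smul_apply, Pi.add_apply, Pi.sub_apply, smul_eq_mul]
  ring

lemma quad_add_lower (M : Matrix (Fin d) (Fin d) ℝ) (x y : Fin d → ℝ) :
    quad M x / 2 - quad M y ≤ quad M (x + y) := by
  simp only [quad, Matrix.mulVec_add, Finset.sum_div, ← Finset.sum_sub_distrib]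
  refine Finset.sum_le_sum fun i _ => ?_
  simp only [Pi.add_apply]
  nlinarith [sq_nonneg (M.mulVec x i + 2 * M.mulVec y i)]

lemma quad_neg (M : Matrix (Fin d) (Fin d) ℝ) (x : Fin d → ℝ) : quad M (-x) = quad M x := by
  simp [quad, Matrix.mulVec_neg]

/-- `quad M` is coercive for invertible `M`: apply the Cauchy–Schwarz inequality to
`y = M⁻¹ (M y)`. -/
lemma exists_sum_sq_le (M : Matrix (Fin d) (Fin d) ℝ) (hM : IsUnit M.det) :
    ∃ K : ℝ, 0 < K ∧ ∀ y : Fin d → ℝ, ∑ i, y i ^ 2 ≤ K * quad M y := by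
  refine ⟨(∑ i, ∑ j, (M⁻¹ i j) ^ 2) + 1, ?_, fun y => ?_⟩
  · have : 0 ≤ ∑ i, ∑ j, (M⁻¹ i j) ^ 2 :=
      Finset.sum_nonneg fun _ _ => Finset.sum_nonneg fun _ _ => sq_nonneg _
    linarith
  · have hy : ∀ i, y i = ∑ j, M⁻¹ i j * M.mulVec y j := by
      intro i
      have : M⁻¹.mulVec (M.mulVec y) = y := by
        rw [Matrix.mulVec_mulVec, Matrix.nonsing_inv_mul M hM, Matrix.one_mulVec]
      conv_lhs => rw [← this]
      rfl
    have h : ∑ i, y i ^ 2 ≤ ∑ i, (∑ j, (M⁻¹ i j) ^ 2) * quad M y := by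
      refine Finset.sum_le_sum fun i _ => ?_
      rw [hy i]
      exact Finset.sum_mul_sq_le_sq_mul_sq _ _ _
    rw [← Finset.sum_mul] at h
    nlinarith [quad_nonneg M y]

lemma quad_pos (M : Matrix (Fin d) (Fin d) ℝ) (hM : IsUnit M.det) {y : Fin d → ℝ} (hy : y ≠ 0) :
    0 < quad M y := by
  obtain ⟨K, hK, h⟩ := exists_sum_sq_le M hM
  obtain ⟨i, hi⟩ := Function.ne_iff.1 hy
  have h1 : 0 < y i ^ 2 := by
    have : y i ≠ 0 := hi
    positivity
  have h2 : y i ^ 2 ≤ ∑ i, y i ^ 2 :=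
    Finset.single_le_sum (f := fun i => y i ^ 2) (fun _ _ => sq_nonneg _) (Finset.mem_univ i)
  have h3 := h y
  by_contra hn
  nlinarith [mul_nonneg hK.le (quad_nonneg M y)]

lemma exists_quad_le_on_cube (M : Matrix (Fin d) (Fin d) ℝ) :
    ∃ C : ℝ, ∀ y : Fin d → ℝ, (∀ i, |y i| ≤ 1) → quad M y ≤ C := by
  refine ⟨∑ i, (∑ j, |M i j|) ^ 2, fun y hy => Finset.sum_le_sum fun i _ => ?_⟩
  rw [← sq_abs, show M.mulVec y i = ∑ j, M i j * y j from rfl]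
  refine pow_le_pow_left₀ (abs_nonneg _) ?_ 2
  refine (Finset.abs_sum_le_sum_abs (fun j => M i j * y j) _).trans
    (Finset.sum_le_sum fun j _ => ?_)
  rw [abs_mul]
  exact mul_le_of_le_one_right (abs_nonneg _) (hy j)

/-! ### Convergence and boundedness -/

lemma summable_int {β : ℝ} (hβ : 0 < β) : Summable fun n : ℤ => Real.exp (-β * (n : ℝ) ^ 2) := by
  have h := summable_pow_mul_jacobiTheta₂_term_bound 0 (T := β / Real.pi)
    (div_pos hβ Real.pi_pos) 0
  refine h.congr fun n => ?_
  have := Real.pi_ne_zero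
  simp only [pow_zero, one_mul]
  congr 1
  field_simp
  ring

lemma summable_std {β : ℝ} (hβ : 0 < β) (d : ℕ) :
    Summable fun k : Fin d → ℤ => Real.exp (-β * ∑ i, (k i : ℝ) ^ 2) := by
  induction d with
  | zero => exact (hasSum_fintype _).summable
  | succ d ih =>
    rw [← (Fin.consEquiv fun _ : Fin (d + 1) => ℤ).summable_iff]
    refine ((summable_int hβ).mul_of_nonneg ih (fun _ => (Real.exp_pos _).le)
      (fun _ => (Real.exp_pos _).le)).congr fun p => ?_
    simp only [Function.comp_apply, Fin.consEquiv_apply, Fin.sum_univ_succ, Fin.cons_zero,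
      Fin.cons_succ, ← Real.exp_add]
    congr 1
    ring

lemma summable_zero (M : Matrix (Fin d) (Fin d) ℝ) (hM : IsUnit M.det) {β : ℝ} (hβ : 0 < β) :
    Summable fun k : Fin d → ℤ => Real.exp (-β * quad M (toReal k)) := by
  obtain ⟨K, hK, h⟩ := exists_sum_sq_le M hM
  refine Summable.of_nonneg_of_le (fun _ => (Real.exp_pos _).le) (fun k => ?_)
    (summable_std (div_pos hβ hK) d)
  rw [Real.exp_le_exp]
  have h1 := mul_le_mul_of_nonneg_left (h (toReal k)) (div_pos hβ hK).le
  have h2 : β / K * (K * quad M (toReal k)) = β * quad M (toReal k) := by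
    field_simp
  simp only [toReal] at *
  linarith

lemma term_le (M : Matrix (Fin d) (Fin d) ℝ) {β : ℝ} (hβ : 0 < β) (x : Fin d → ℝ)
    (k : Fin d → ℤ) :
    Real.exp (-β * quad M (toReal k + x))
      ≤ Real.exp (β * quad M x) * Real.exp (-(β / 2) * quad M (toReal k)) := by
  rw [← Real.exp_add, Real.exp_le_exp]
  nlinarith [quad_add_lower M (toReal k) x]

lemma summable_term (M : Matrix (Fin d) (Fin d) ℝ) (hM : IsUnit M.det) {β : ℝ} (hβ : 0 < β)
    (x : Fin d → ℝ) : Summable fun k : Fin d → ℤ => Real.exp (-β * quad M (toReal k + x)) :=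
  Summable.of_nonneg_of_le (fun _ => (Real.exp_pos _).le) (term_le M hβ x)
    ((summable_zero M hM (half_pos hβ)).mul_left _)

lemma thetaQ_add_int (M : Matrix (Fin d) (Fin d) ℝ) (β : ℝ) (x : Fin d → ℝ) (m : Fin d → ℤ) :
    thetaQ M β (toReal m + x) = thetaQ M β x := by
  unfold thetaQ
  rw [← (Equiv.addRight m).tsum_eq (fun k => Real.exp (-β * quad M (toReal k + x)))]
  refine tsum_congr fun k => ?_
  have : toReal ((Equiv.addRight m) k) + x = toReal k + (toReal m + x) := by
    ext j
    simp [toReal, add_assoc]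
  rw [this]

lemma thetaQ_neg (M : Matrix (Fin d) (Fin d) ℝ) (β : ℝ) (x : Fin d → ℝ) :
    thetaQ M β (-x) = thetaQ M β x := by
  unfold thetaQ
  rw [← (Equiv.neg (Fin d → ℤ)).tsum_eq (fun k => Real.exp (-β * quad M (toReal k + x)))]
  refine tsum_congr fun k => ?_
  have : toReal ((Equiv.neg (Fin d → ℤ)) k) + x = -(toReal k + -x) := by
    ext j
    simp [toReal, add_comm]
  rw [this, quad_neg]

/-- By periodicity it suffices to bound `thetaQ` on the unit cube. -/
lemma bddAbove_thetaQ (M : Matrix (Fin d) (Fin d) ℝ) (hM : IsUnit M.det) {β : ℝ} (hβ : 0 < β) :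
    BddAbove (Set.range (thetaQ M β)) := by
  obtain ⟨C, hC⟩ := exists_quad_le_on_cube M
  refine ⟨Real.exp (β * C) * ∑' k : Fin d → ℤ, Real.exp (-(β / 2) * quad M (toReal k)), ?_⟩
  rintro _ ⟨x, rfl⟩
  have hx : x = toReal (fun j => ⌊x j⌋) + fun j => Int.fract (x j) := by
    ext j
    simp [toReal]
  rw [hx, thetaQ_add_int, ← tsum_mul_left]
  refine (summable_term M hM hβ _).tsum_le_tsum (fun k => (term_le M hβ _ k).trans ?_)
    ((summable_zero M hM (half_pos hβ)).mul_left _)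
  refine mul_le_mul_of_nonneg_right ?_ (Real.exp_pos _).le
  rw [Real.exp_le_exp]
  refine mul_le_mul_of_nonneg_left (hC _ fun i => ?_) hβ.le
  rw [abs_of_nonneg (Int.fract_nonneg _)]
  exact (Int.fract_lt_one _).le

lemma one_le_thetaQ_zero (M : Matrix (Fin d) (Fin d) ℝ) (hM : IsUnit M.det) {β : ℝ}
    (hβ : 0 < β) : 1 ≤ thetaQ M β 0 := by
  have h := (summable_term M hM hβ 0).le_tsum 0 (fun _ _ => (Real.exp_pos _).le)
  have h0 : toReal (0 : Fin d → ℤ) + 0 = 0 := by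
    ext j
    simp [toReal]
  have h1 : quad M (0 : Fin d → ℝ) = 0 := by simp [quad]
  rw [h0, h1, mul_zero, Real.exp_zero] at h
  exact h

/-! ### The duplication formula -/

/-- A vector `c ∈ {0, 1}^d` as an element of `ℤ^d`. -/
def bits (c : Fin d → Fin 2) : Fin d → ℤ := fun j => ((c j : ℕ) : ℤ)

/-- The bijection `(c, a, b) ↦ (a + b + c, a - b)`. Its inverse takes `c` to be the common parity
of `k + l` and `k - l`, and `a`, `b` to be the floors of their halves. -/
def pairEquiv (d : ℕ) : (Fin d → Fin 2) × ((Fin d → ℤ) × (Fin d → ℤ)) ≃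
    (Fin d → ℤ) × (Fin d → ℤ) where
  toFun p := (fun j => p.2.1 j + p.2.2 j + bits p.1 j, fun j => p.2.1 j - p.2.2 j)
  invFun q := (fun j => ⟨((q.1 j + q.2 j) % 2).toNat, by omega⟩,
    (fun j => (q.1 j + q.2 j) / 2, fun j => (q.1 j - q.2 j) / 2))
  left_inv := by
    rintro ⟨c, a, b⟩
    simp only [bits, Prod.mk.injEq]
    refine ⟨?_, ?_, ?_⟩ <;> ext j <;> have := (c j).isLt <;> (try dsimp only) <;> omega
  right_inv := by
    rintro ⟨k, l⟩
    simp only [bits, Prod.mk.injEq]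
    refine ⟨?_, ?_⟩ <;> ext j <;> omega

/-- The vector `c / 2` for `c ∈ {0, 1}^d`; these represent `(½ℤ)^d / ℤ^d`. -/
noncomputable def halfBits (c : Fin d → Fin 2) : Fin d → ℝ := (1 / 2 : ℝ) • toReal (bits c)

/-- The parallelogram law, termwise, in the variables `(c, a, b)` of `pairEquiv`. -/
lemma term_mul_term (M : Matrix (Fin d) (Fin d) ℝ) (β : ℝ) (x y : Fin d → ℝ)
    (p : (Fin d → Fin 2) × ((Fin d → ℤ) × (Fin d → ℤ))) :
    Real.exp (-β * quad M (toReal (pairEquiv d p).1 + x))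
      * Real.exp (-β * quad M (toReal (pairEquiv d p).2 + y))
    = Real.exp (-(2 * β) * quad M (toReal p.2.1 + (halfBits p.1 + (1 / 2 : ℝ) • (x + y))))
      * Real.exp (-(2 * β) * quad M (toReal p.2.2 + (halfBits p.1 + (1 / 2 : ℝ) • (x - y)))) := by
  obtain ⟨c, a, b⟩ := p
  rw [← Real.exp_add, ← Real.exp_add]
  congr 1
  have hp := quad_parallelogram M (toReal (pairEquiv d (c, a, b)).1 + x)
    (toReal (pairEquiv d (c, a, b)).2 + y)
  have e1 : (1 / 2 : ℝ) • (toReal (pairEquiv d (c, a, b)).1 + x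
      + (toReal (pairEquiv d (c, a, b)).2 + y))
      = toReal a + (halfBits c + (1 / 2 : ℝ) • (x + y)) := by
    ext j
    simp [toReal, halfBits, pairEquiv]
    ring
  have e2 : (1 / 2 : ℝ) • (toReal (pairEquiv d (c, a, b)).1 + x
      - (toReal (pairEquiv d (c, a, b)).2 + y))
      = toReal b + (halfBits c + (1 / 2 : ℝ) • (x - y)) := by
    ext j
    simp [toReal, halfBits, pairEquiv]
    ring
  rw [e1, e2] at hp
  linear_combination (-β) * hp

lemma thetaQ_mul (M : Matrix (Fin d) (Fin d) ℝ) (hM : IsUnit M.det) {β : ℝ} (hβ : 0 < β)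
    (x y : Fin d → ℝ) :
    thetaQ M β x * thetaQ M β y
      = ∑ c : Fin d → Fin 2, thetaQ M (2 * β) (halfBits c + (1 / 2 : ℝ) • (x + y))
          * thetaQ M (2 * β) (halfBits c + (1 / 2 : ℝ) • (x - y)) := by
  have h2β : 0 < 2 * β := by positivity
  have hs : ∀ z, Summable fun k : Fin d → ℤ => ‖Real.exp (-β * quad M (toReal k + z))‖ :=
    fun z => (summable_term M hM hβ z).norm
  have hs2 : ∀ z, Summable fun k : Fin d → ℤ => ‖Real.exp (-(2 * β) * quad M (toReal k + z))‖ :=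
    fun z => (summable_term M hM h2β z).norm
  have hprod : Summable fun q : (Fin d → ℤ) × (Fin d → ℤ) =>
      Real.exp (-β * quad M (toReal q.1 + x)) * Real.exp (-β * quad M (toReal q.2 + y)) :=
    (summable_term M hM hβ x).mul_of_nonneg (summable_term M hM hβ y)
      (fun _ => (Real.exp_pos _).le) (fun _ => (Real.exp_pos _).le)
  have hsum : Summable fun p : (Fin d → Fin 2) × ((Fin d → ℤ) × (Fin d → ℤ)) =>
      Real.exp (-(2 * β) * quad M (toReal p.2.1 + (halfBits p.1 + (1 / 2 : ℝ) • (x + y))))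
      * Real.exp (-(2 * β) * quad M (toReal p.2.2 + (halfBits p.1 + (1 / 2 : ℝ) • (x - y)))) :=
    ((pairEquiv d).summable_iff.2 hprod).congr fun p => term_mul_term M β x y p
  have hR : ∀ c : Fin d → Fin 2, thetaQ M (2 * β) (halfBits c + (1 / 2 : ℝ) • (x + y))
        * thetaQ M (2 * β) (halfBits c + (1 / 2 : ℝ) • (x - y))
      = ∑' q : (Fin d → ℤ) × (Fin d → ℤ),
        Real.exp (-(2 * β) * quad M (toReal q.1 + (halfBits c + (1 / 2 : ℝ) • (x + y))))
        * Real.exp (-(2 * β) * quad M (toReal q.2 + (halfBits c + (1 / 2 : ℝ) • (x - y)))) :=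
    fun c => tsum_mul_tsum_of_summable_norm (hs2 _) (hs2 _)
  calc thetaQ M β x * thetaQ M β y
      = ∑' q : (Fin d → ℤ) × (Fin d → ℤ),
        Real.exp (-β * quad M (toReal q.1 + x)) * Real.exp (-β * quad M (toReal q.2 + y)) :=
        tsum_mul_tsum_of_summable_norm (hs x) (hs y)
    _ = ∑' p, Real.exp (-β * quad M (toReal (pairEquiv d p).1 + x))
          * Real.exp (-β * quad M (toReal (pairEquiv d p).2 + y)) :=
        ((pairEquiv d).tsum_eq _).symm
    _ = _ := by
        rw [tsum_congr (term_mul_term M β x y), hsum.tsum_prod, tsum_fintype]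
        exact Finset.sum_congr rfl fun c _ => (hR c).symm

lemma sum_sq_sub (M : Matrix (Fin d) (Fin d) ℝ) (hM : IsUnit M.det) {β : ℝ} (hβ : 0 < β)
    (x : Fin d → ℝ) :
    ∑ c : Fin d → Fin 2, (thetaQ M (2 * β) (halfBits c) - thetaQ M (2 * β) (halfBits c + x)) ^ 2
      = thetaQ M β 0 ^ 2 - 2 * thetaQ M β x ^ 2
        + thetaQ M β ((2 : ℝ) • x) * thetaQ M β 0 := by
  have h0 := thetaQ_mul M hM hβ 0 0
  have h1 := thetaQ_mul M hM hβ x (-x)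
  have h2 := thetaQ_mul M hM hβ ((2 : ℝ) • x) 0
  have e : (1 / 2 : ℝ) • (x - -x) = x := by
    ext j
    simp
    ring
  rw [e, thetaQ_neg] at h1
  simp only [add_neg_cancel, smul_zero, add_zero, sub_zero, smul_smul] at h0 h1 h2
  norm_num at h2
  rw [pow_two (thetaQ M β 0), pow_two (thetaQ M β x), h0, h1, h2, Finset.mul_sum,
    ← Finset.sum_sub_distrib, ← Finset.sum_add_distrib]
  exact Finset.sum_congr rfl fun c _ => by ring

/-! ### Maximality and the equality case -/

lemma thetaQ_le (M : Matrix (Fin d) (Fin d) ℝ) (hM : IsUnit M.det) {β : ℝ} (hβ : 0 < β)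
    (x : Fin d → ℝ) : thetaQ M β x ≤ thetaQ M β 0 := by
  have hb := bddAbove_thetaQ M hM hβ
  set S := ⨆ y, thetaQ M β y with hS
  have hle : ∀ y, thetaQ M β y ≤ S := fun y => le_ciSup hb y
  have h1 := one_le_thetaQ_zero M hM hβ
  suffices hST : S ≤ thetaQ M β 0 from (hle x).trans hST
  have hsq : ∀ y, thetaQ M β y ≤ √((thetaQ M β 0 ^ 2 + S * thetaQ M β 0) / 2) := by
    intro y
    refine Real.le_sqrt_of_sq_le ?_
    have hn : 0 ≤ thetaQ M β 0 ^ 2 - 2 * thetaQ M β y ^ 2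
        + thetaQ M β ((2 : ℝ) • y) * thetaQ M β 0 := by
      rw [← sum_sq_sub M hM hβ y]
      exact Finset.sum_nonneg fun _ _ => sq_nonneg _
    nlinarith [hle ((2 : ℝ) • y)]
  have hS1 : 1 ≤ S := h1.trans (hle 0)
  have hS2 := pow_le_pow_left₀ (by linarith) (ciSup_le hsq) 2
  rw [Real.sq_sqrt (by positivity), ← hS] at hS2
  -- `2 S² ≤ T² + S T` factors as `(2 S + T) (S - T) ≤ 0`.
  by_contra hlt
  nlinarith [mul_pos (show 0 < 2 * S + thetaQ M β 0 by linarith)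
    (sub_pos.2 (not_le.1 hlt))]

/-- Equality at `β` propagates to `2 * β`. -/
lemma thetaQ_eq_double (M : Matrix (Fin d) (Fin d) ℝ) (hM : IsUnit M.det) {β : ℝ} (hβ : 0 < β)
    {x : Fin d → ℝ} (h : thetaQ M β x = thetaQ M β 0) :
    thetaQ M (2 * β) x = thetaQ M (2 * β) 0 := by
  have hs := sum_sq_sub M hM hβ x
  rw [h] at hs
  have h1 := one_le_thetaQ_zero M hM hβ
  have h2 := thetaQ_le M hM hβ ((2 : ℝ) • x)
  have hc := Finset.single_le_sum
    (f := fun c : Fin d → Fin 2 =>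
      (thetaQ M (2 * β) (halfBits c) - thetaQ M (2 * β) (halfBits c + x)) ^ 2)
    (fun _ _ => sq_nonneg _) (Finset.mem_univ 0)
  have h0 : halfBits (0 : Fin d → Fin 2) = 0 := by
    ext j
    simp [halfBits, toReal, bits]
  simp only [h0, zero_add] at hc
  have hz : (thetaQ M (2 * β) 0 - thetaQ M (2 * β) x) ^ 2 = 0 :=
    le_antisymm (by nlinarith) (sq_nonneg _)
  linarith [pow_eq_zero_iff (two_ne_zero) |>.1 hz]

lemma exists_int_of_thetaQ_eq (M : Matrix (Fin d) (Fin d) ℝ) (hM : IsUnit M.det) {β : ℝ}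
    (hβ : 0 < β) {x : Fin d → ℝ} (h : thetaQ M β x = thetaQ M β 0) :
    ∃ k : Fin d → ℤ, x = toReal k := by
  by_contra hx
  have hpos : ∀ k : Fin d → ℤ, 0 < quad M (toReal k + x) := by
    refine fun k => quad_pos M hM fun h0 => hx ⟨-k, ?_⟩
    ext j
    have := congrFun h0 j
    simp only [toReal, Pi.add_apply, Pi.zero_apply, Pi.neg_apply, Int.cast_neg] at *
    linarith
  have hβn : ∀ n : ℕ, 0 < 2 ^ n * β := fun n => by positivity
  have heq : ∀ n : ℕ, thetaQ M (2 ^ n * β) x = thetaQ M (2 ^ n * β) 0 := by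
    intro n
    induction n with
    | zero => simpa using h
    | succ n ih =>
      rw [pow_succ', mul_assoc]
      exact thetaQ_eq_double M hM (hβn n) ih
  have hlim : Tendsto (fun n : ℕ => thetaQ M (2 ^ n * β) x) atTop (𝓝 0) := by
    rw [← tsum_zero (α := ℝ) (β := Fin d → ℤ)]
    refine tendsto_tsum_of_dominated_convergence (summable_term M hM hβ x) (fun k => ?_)
      (Eventually.of_forall fun n k => ?_)
    · have ht : Tendsto (fun n : ℕ => (2 : ℝ) ^ n * (β * quad M (toReal k + x))) atTop atTop :=
        (tendsto_pow_atTop_atTop_of_one_lt one_lt_two).atTop_mul_const (mul_pos hβ (hpos k))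
      refine (Real.tendsto_exp_neg_atTop_nhds_zero.comp ht).congr fun n => ?_
      simp only [Function.comp_apply]
      congr 1
      ring
    · rw [Real.norm_of_nonneg (Real.exp_pos _).le, Real.exp_le_exp]
      have : (1 : ℝ) ≤ 2 ^ n := one_le_pow₀ one_le_two
      nlinarith [mul_pos hβ (hpos k)]
  have := ge_of_tendsto' hlim fun n => (one_le_thetaQ_zero M hM (hβn n)).trans_eq (heq n).symm
  linarith

lemma latTheta_mulVec (M : Matrix (Fin d) (Fin d) ℝ) (x : Fin d → ℝ) (α : ℝ) :
    latTheta d M (M.mulVec x) α = thetaQ M (Real.pi * α) x := by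
  unfold latTheta thetaQ
  refine tsum_congr fun k => ?_
  simp only [quad, Matrix.mulVec_add, Pi.add_apply, neg_mul]
  rfl

end LatTheta

open LatTheta

/-- `θ_{Λ+u}(α) ≤ θ_Λ(α)` with equality iff `u ∈ Λ`. -/
theorem translated_theta_le_theta
    (d : ℕ) (hd : 1 ≤ d)
    (M : Matrix (Fin d) (Fin d) ℝ) (hM : IsUnit M.det)
    (u : Fin d → ℝ) (α : ℝ) (hα : 0 < α) :
    latTheta d M u α ≤ latTheta d M 0 α ∧
    (latTheta d M u α = latTheta d M 0 α ↔
      ∃ k : Fin d → ℤ, u = M.mulVec (fun j => (k j : ℝ))) := by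
  have hβ : 0 < Real.pi * α := mul_pos Real.pi_pos hα
  obtain ⟨x, rfl⟩ : ∃ x, u = M.mulVec x :=
    ⟨M⁻¹.mulVec u, by rw [Matrix.mulVec_mulVec, Matrix.mul_nonsing_inv M hM, Matrix.one_mulVec]⟩
  have h0 : latTheta d M 0 α = thetaQ M (Real.pi * α) 0 := by
    rw [← latTheta_mulVec, Matrix.mulVec_zero]
  rw [h0, latTheta_mulVec]
  refine ⟨thetaQ_le M hM hβ x, fun h => ?_, ?_⟩
  · obtain ⟨k, rfl⟩ := exists_int_of_thetaQ_eq M hM hβ h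
    exact ⟨k, rfl⟩
  · rintro ⟨k, hk⟩
    have h1 : latTheta d M (M.mulVec x) α = latTheta d M (M.mulVec (toReal k)) α := by
      rw [hk]
      rfl
    rw [latTheta_mulVec, latTheta_mulVec] at h1
    rw [h1]
    simpa using thetaQ_add_int M (Real.pi * α) 0 k
end
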